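/- arXiv:1110.1963 — 3 statements merged into one kernel-verified Lean document; each statement's English description precedes it below -/
import Mathlib

section
/- Let s be the number of square-free monomials of degree d+1 lying in I \ J. If r > s and s ≤ 1, then depth_S (I/J) = d. -/
open MvPolynomial

/-- The square-free monomial `∏ i ∈ T, X i` associated to a set `T` of variables. -/
noncomputable def sqMon (K : Type) [Field K] {n : ℕ} (T : Finset (Fin n)) :
    MvPolynomial (Fin n) K :=
  ∏ i ∈ T, X i

/-- `GenBySqMonOfDeg K P I` means: `I` is generated by square-free monomials whose
degrees satisfy the predicate `P`. -/
def GenBySqMonOfDeg (K : Type) [Field K] {n : ℕ} (P : ℕ → Prop)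
    (I : Ideal (MvPolynomial (Fin n) K)) : Prop :=
  ∃ G : Set (Finset (Fin n)), (∀ T ∈ G, P T.card) ∧ I = Ideal.span (sqMon K '' G)

/-- `rho K d I` : the number of square-free monomials of degree `d` belonging to `I`. -/
noncomputable def rho (K : Type) [Field K] {n : ℕ} (d : ℕ)
    (I : Ideal (MvPolynomial (Fin n) K)) : ℕ :=
  Set.ncard {T : Finset (Fin n) | T.card = d ∧ sqMon K T ∈ I}

/-- The maximal graded ideal `(x_1, …, x_n)` of `K[x_1, …, x_n]`. -/
noncomputable def maxGraded (K : Type) [Field K] (n : ℕ) :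
    Ideal (MvPolynomial (Fin n) K) :=
  Ideal.span (Set.range (X : Fin n → MvPolynomial (Fin n) K))

/-- The depth of the module `M` with respect to the ideal `I` : the supremum of the
lengths of `M`-regular sequences consisting of elements of `I`. -/
noncomputable def moduleDepth {R : Type} [CommRing R] (I : Ideal R)
    (M : Type) [AddCommGroup M] [Module R M] : ℕ∞ :=
  sSup {k : ℕ∞ | ∃ rs : List R, k = (rs.length : ℕ∞) ∧ (∀ r ∈ rs, r ∈ I) ∧
    RingTheory.Sequence.IsRegular M rs}

/-- The `R`-module `I/J` (more precisely `I/(I ∩ J)`, which is `I/J` when `J ≤ I`). -/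
noncomputable abbrev idealQuot {R : Type} [CommRing R] (I J : Ideal R) : Type :=
  ↥I ⧸ (Submodule.comap I.subtype (J : Submodule R R))

/-!
Write `m = (x_1, …, x_n)` and `P_T = (x_j : j ∉ T)`. By Rees' theorem, depth is the least `i` with
`Ext^i(S/m, I/J) ≠ 0`. Removing the square-free monomials of `I` outside `J` one at a time filters
`I/J` with factors `S/P_T`. As `S/P_T` is a polynomial ring in `|T|` variables,
`Ext^i(S/m, S/P_T)` vanishes for `i < |T|` and has length one for `i = |T|`. As `|T| ≥ d`
throughout, `Ext^i(S/m, I/J) = 0` for `i < d`. Let `L` be generated by `J` and the square-free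
monomials of degree `> d` in `I`. Each `S/P_T` with `T` a generator of degree `d` is a retract of
`I/L`, so `Ext^d(S/m, I/L)` has length `r`, whereas `Ext^{d+1}(S/m, L/J)` has length at most
`s < r`. Hence the exact sequence `Ext^d(S/m, I/J) → Ext^d(S/m, I/L) → Ext^{d+1}(S/m, L/J)` forces
`Ext^d(S/m, I/J) ≠ 0`.
-/

section ExtLength

open CategoryTheory Abelian

universe u v

lemma length_le_add_of_exact {R : Type*} [Ring R] {A B C : Type*} [AddCommGroup A] [Module R A]
    [AddCommGroup B] [Module R B] [AddCommGroup C] [Module R C] {f : A →ₗ[R] B} {g : B →ₗ[R] C}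
    (h : Function.Exact f g) :
    Module.length R B ≤ Module.length R A + Module.length R C := by
  calc Module.length R B
      = Module.length R (LinearMap.range f) + Module.length R (LinearMap.range g) :=
        Module.length_eq_add_of_exact (LinearMap.range f).subtype g.rangeRestrict
          (Submodule.subtype_injective _) g.surjective_rangeRestrict <| by
            rw [LinearMap.exact_iff, LinearMap.ker_rangeRestrict, Submodule.range_subtype,
              h.linearMap_ker_eq]
    _ ≤ Module.length R A + Module.length R C :=
        add_le_add (Module.length_le_of_surjective _ f.surjective_rangeRestrict)
          (Module.length_le_of_injective _ (Submodule.subtype_injective _))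

variable {R : Type u} [CommRing R] {I : Ideal R} {A B C : Type u} [AddCommGroup A] [Module R A]
  [AddCommGroup B] [Module R B] [AddCommGroup C] [Module R C] {i : ℕ}

/-- The `R`-module `Ext^i(R ⧸ I, M)`. -/
abbrev ExtResidue (I : Ideal R) (M : Type u) [AddCommGroup M] [Module R M] (i : ℕ) : Type u :=
  Ext (ModuleCat.of R (R ⧸ I)) (ModuleCat.of R M) i

/-- The length of `Ext^i(R ⧸ I, M)`. When `I` is maximal this is the `i`-th Bass number of `M`
at `I`; by the theorem of Rees its first nonzero value is at `i = depth M`. -/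
noncomputable def extLength (I : Ideal R) (M : Type u) [AddCommGroup M] [Module R M] (i : ℕ) :
    ℕ∞ :=
  Module.length R (ExtResidue I M i)

/-- The `R`-linear map `Ext^i(R ⧸ I, A) → Ext^i(R ⧸ I, B)` induced by `f : A → B`. -/
noncomputable abbrev extResidueMap (I : Ideal R) (f : A →ₗ[R] B) (i : ℕ) :
    ExtResidue I A i →ₗ[R] ExtResidue I B i :=
  (Ext.mk₀ (ModuleCat.ofHom f)).postcompOfLinear R _ (add_zero i)

lemma extResidueMap_id_apply (x : ExtResidue I A i) :
    extResidueMap I LinearMap.id i x = x :=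
  x.comp_mk₀_id

lemma extResidueMap_comp_apply (g : B →ₗ[R] C) (f : A →ₗ[R] B) (x : ExtResidue I A i) :
    extResidueMap I (g ∘ₗ f) i x = extResidueMap I g i (extResidueMap I f i x) := by
  simp [ModuleCat.ofHom_comp, ← Ext.mk₀_comp_mk₀]

lemma extResidueMap_zero_apply (x : ExtResidue I A i) :
    extResidueMap I (0 : A →ₗ[R] B) i x = 0 := by
  simp [ModuleCat.ofHom_zero]

lemma extLength_eq_zero_of_subsingleton [Subsingleton A] : extLength I A i = 0 := by
  rw [extLength, Module.length_eq_zero_iff]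
  refine subsingleton_of_forall_eq 0 fun x => ?_
  rw [← extResidueMap_id_apply x, Subsingleton.elim LinearMap.id (0 : A →ₗ[R] A),
    extResidueMap_zero_apply]

lemma extResidueMap_leftInverse {f : A →ₗ[R] B} {g : B →ₗ[R] A} (h : g ∘ₗ f = LinearMap.id) :
    Function.LeftInverse (extResidueMap I g i) (extResidueMap I f i) := fun x => by
  rw [← extResidueMap_comp_apply, h, extResidueMap_id_apply]

lemma extLength_congr (e : A ≃ₗ[R] B) (i : ℕ) : extLength I A i = extLength I B i :=
  LinearEquiv.length_eq
    { extResidueMap I e.toLinearMap i with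
      invFun := extResidueMap I e.symm.toLinearMap i
      left_inv := extResidueMap_leftInverse e.symm_comp
      right_inv := extResidueMap_leftInverse e.comp_symm }

lemma sum_extLength_le {ι : Type*} [Fintype ι] {A : ι → Type u} [∀ j, AddCommGroup (A j)]
    [∀ j, Module R (A j)] (f : ∀ j, A j →ₗ[R] B) (g : ∀ j, B →ₗ[R] A j)
    (hid : ∀ j, g j ∘ₗ f j = LinearMap.id) (hzero : ∀ j k, j ≠ k → g j ∘ₗ f k = 0) :
    ∑ j, extLength I (A j) i ≤ extLength I B i := by
  classical
  simp only [extLength]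
  rw [← Module.length_pi_of_fintype]
  refine Module.length_le_of_surjective (LinearMap.pi fun j => extResidueMap I (g j) i) fun y =>
    ⟨∑ k, extResidueMap I (f k) i (y k), funext fun j => ?_⟩
  rw [LinearMap.pi_apply, map_sum, Finset.sum_eq_single j]
  · rw [← extResidueMap_comp_apply, hid, extResidueMap_id_apply]
  · intro k _ hk
    rw [← extResidueMap_comp_apply, hzero j k hk.symm, extResidueMap_zero_apply]
  · simp

lemma shortExact_shortComplexOfCompEqZero {f : A →ₗ[R] B} {g : B →ₗ[R] C}
    (hf : Function.Injective f) (hg : Function.Surjective g) (h : Function.Exact f g) :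
    (ModuleCat.shortComplexOfCompEqZero f g h.linearMap_comp_eq_zero).ShortExact where
  exact := ModuleCat.shortComplex_exact _ h
  mono_f := (ModuleCat.mono_iff_injective _).mpr hf
  epi_g := (ModuleCat.epi_iff_surjective _).mpr hg

lemma exact_extResidueMap {f : A →ₗ[R] B} {g : B →ₗ[R] C} (hf : Function.Injective f)
    (hg : Function.Surjective g) (h : Function.Exact f g) (i : ℕ) :
    Function.Exact (extResidueMap I f i) (extResidueMap I g i) := by
  refine fun x => ⟨fun hx => ?_, ?_⟩
  · exact Ext.covariant_sequence_exact₂ _ (shortExact_shortComplexOfCompEqZero hf hg h) x hx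
  · rintro ⟨y, rfl⟩
    rw [← extResidueMap_comp_apply, h.linearMap_comp_eq_zero, extResidueMap_zero_apply]

lemma exists_connecting_exact {f : A →ₗ[R] B} {g : B →ₗ[R] C} (hf : Function.Injective f)
    (hg : Function.Surjective g) (h : Function.Exact f g) (i : ℕ) :
    ∃ δ : ExtResidue I C i →ₗ[R] ExtResidue I A (i + 1),
      Function.Exact (extResidueMap I g i) δ ∧ Function.Exact δ (extResidueMap I f (i + 1)) := by
  have hS := shortExact_shortComplexOfCompEqZero hf hg h
  refine ⟨hS.extClass.postcompOfLinear R _ rfl, fun x => ⟨fun hx => ?_, ?_⟩,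
    fun x => ⟨fun hx => ?_, ?_⟩⟩
  · exact Ext.covariant_sequence_exact₃ _ hS x rfl hx
  · rintro ⟨y, rfl⟩
    exact (Ext.comp_assoc_of_second_deg_zero ..).trans
      ((congrArg (fun z => y.comp z rfl) hS.comp_extClass).trans (Ext.comp_zero ..))
  · exact Ext.covariant_sequence_exact₁ _ hS x hx rfl
  · rintro ⟨y, rfl⟩
    have hy : y.comp (hS.extClass.comp (.mk₀ (ModuleCat.ofHom f)) (add_zero 1)) rfl = 0 :=
      (congrArg (fun z => y.comp z rfl) hS.extClass_comp).trans (Ext.comp_zero ..)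
    exact (Ext.comp_assoc_of_third_deg_zero ..).trans hy

lemma extLength_le_add_of_exact {f : A →ₗ[R] B} {g : B →ₗ[R] C} (hf : Function.Injective f)
    (hg : Function.Surjective g) (h : Function.Exact f g) (i : ℕ) :
    extLength I B i ≤ extLength I A i + extLength I C i :=
  length_le_add_of_exact (exact_extResidueMap hf hg h i)

lemma extLength_le_add_extLength_succ {f : A →ₗ[R] B} {g : B →ₗ[R] C}
    (hf : Function.Injective f) (hg : Function.Surjective g) (h : Function.Exact f g) (i : ℕ) :
    extLength I C i ≤ extLength I B i + extLength I A (i + 1) :=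
  let ⟨_, hδ, _⟩ := exists_connecting_exact hf hg h i
  length_le_add_of_exact hδ

lemma smul_extResidue_eq_zero {x : R} (hx : x ∈ I) (y : ExtResidue I A i) : x • y = 0 := by
  have hx' : x ∈ Module.annihilator R (ModuleCat.of R (R ⧸ I)) :=
    (Ideal.annihilator_quotient (I := I)).ge hx
  have h := congrArg (fun φ => φ.hom y) (Ext.postcomp_smul_id_eq_zero_of_mem_annihilator
    (M := ModuleCat.of R A) hx' i)
  rwa [Ext.smul_eq_comp_mk₀]

/-- Multiplication by `x ∈ I` is zero on `Ext^i(R ⧸ I, A)`, so the long exact sequence of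
`0 → A → A → C → 0` breaks into short ones. -/
lemma extLength_eq_add_of_exact_lsmul {x : R} (hx : x ∈ I) (hreg : IsSMulRegular A x)
    {g : A →ₗ[R] C} (hg : Function.Surjective g)
    (h : Function.Exact (LinearMap.lsmul R A x) g) (i : ℕ) :
    extLength I C i = extLength I A i + extLength I A (i + 1) := by
  have hmul_zero (i : ℕ) (y : ExtResidue I A i) :
      extResidueMap I (LinearMap.lsmul R A x) i y = 0 :=
    (Ext.smul_eq_comp_mk₀ y x).symm.trans (smul_extResidue_eq_zero hx y)
  have hinj : Function.Injective (LinearMap.lsmul R A x) := hreg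
  obtain ⟨δ, hgδ, hδf⟩ := exists_connecting_exact (I := I) hinj hg h i
  refine Module.length_eq_add_of_exact _ δ ?_ (fun y => (hδf y).mp (hmul_zero _ y)) hgδ
  refine (injective_iff_map_eq_zero _).mpr fun y hy => ?_
  obtain ⟨z, rfl⟩ := (exact_extResidueMap hinj hg h i y).mp hy
  exact hmul_zero i z

lemma extLength_zero_eq_length_hom (I : Ideal R) (A : Type u) [AddCommGroup A] [Module R A] :
    extLength I A 0 = Module.length R ((R ⧸ I) →ₗ[R] A) :=
  (Ext.linearEquiv₀.trans ModuleCat.homLinearEquiv).length_eq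

lemma extLength_zero_of_isSMulRegular {x : R} (hx : x ∈ I) (hreg : IsSMulRegular A x) :
    extLength I A 0 = 0 := by
  rw [extLength_zero_eq_length_hom, Module.length_eq_zero_iff]
  refine subsingleton_of_forall_eq 0 fun f => LinearMap.ext fun y => hreg ?_
  have hxy : x • y = 0 := (Module.mem_annihilator (M := R ⧸ I)).mp
    (Ideal.annihilator_quotient.ge hx) y
  simp only [← map_smul, hxy, map_zero, LinearMap.zero_apply, smul_zero]

lemma extLength_quotient_zero (I : Ideal R) [I.IsMaximal] : extLength I (R ⧸ I) 0 = 1 := by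
  have : IsSimpleModule R (R ⧸ I) := isSimpleModule_iff_quot_maximal.mpr ⟨I, ‹_›, ⟨.refl _ _⟩⟩
  rw [extLength_zero_eq_length_hom, ← Module.length_eq_one R (R ⧸ I)]
  refine LinearEquiv.length_eq (.ofBijective (LinearMap.applyₗ 1) ⟨fun f g h => ?_, fun y => ?_⟩)
  · exact Submodule.linearMap_qext _ (LinearMap.ext_ring h)
  · exact ⟨LinearMap.mulLeft R y, mul_one y⟩

/-- By Nakayama's lemma some `x ∈ I` acts as the identity on `M` if `I • M = M`, but every such
`x` acts as zero on `Ext^i(R ⧸ I, M)`. -/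
lemma smul_top_lt_top_of_extLength_ne_zero [Module.Finite R A] (h : extLength I A i ≠ 0) :
    I • (⊤ : Submodule R A) < ⊤ := by
  refine lt_top_iff_ne_top.mpr fun htop => h ?_
  obtain ⟨x, hx, hx_smul⟩ := Submodule.exists_mem_and_smul_eq_self_of_fg_of_le_smul I ⊤
    Module.Finite.fg_top htop.ge
  have hx_id : x • 𝟙 (ModuleCat.of R A) = 𝟙 _ := by
    ext a
    exact hx_smul a trivial
  rw [extLength, Module.length_eq_zero_iff]
  refine subsingleton_of_forall_eq 0 fun y => ?_
  rw [← smul_extResidue_eq_zero hx y, Ext.smul_eq_comp_mk₀, hx_id, Ext.comp_mk₀_id]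

end ExtLength

lemma moduleDepth_eq_of_extLength {R : Type} [CommRing R] [IsNoetherianRing R] {I : Ideal R}
    {M : Type} [AddCommGroup M] [Module R M] [Module.Finite R M] {d : ℕ}
    (hlt : ∀ i < d, extLength I M i = 0) (hd : extLength I M d ≠ 0) :
    moduleDepth I M = d := by
  have hsupp : Module.support R (ModuleCat.of R (R ⧸ I)) = PrimeSpectrum.zeroLocus I :=
    (Module.support_eq_zeroLocus (M := R ⧸ I)).trans (by rw [Ideal.annihilator_quotient])
  have : Module.Finite R (ModuleCat.of R (R ⧸ I)) := inferInstanceAs (Module.Finite R (R ⧸ I))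
  have : Module.Finite R (ModuleCat.of R M) := ‹Module.Finite R M›
  have hsmul := smul_top_lt_top_of_extLength_ne_zero hd
  simp only [extLength, Module.length_eq_zero_iff, ne_eq] at hlt hd
  apply le_antisymm
  · refine sSup_le ?_
    rintro _ ⟨rs, rfl, hmem, hreg⟩
    refine Nat.cast_le.mpr (le_of_not_gt fun hlen => hd ?_)
    exact ModuleCat.subsingleton_ext_of_exists_isRegular I _ hsupp.subset (ModuleCat.of R M)
      hsmul rs hmem hreg d hlen
  · obtain ⟨rs, hlen, hmem, hreg⟩ := ModuleCat.exists_isRegular_of_exists_subsingleton_ext I d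
      (ModuleCat.of R M) hsmul _ hsupp hlt
    exact le_sSup ⟨rs, by rw [hlen], hmem, hreg⟩

section IdealQuot

variable {R : Type} [CommRing R] {I J L P : Ideal R} {a : R}

lemma idealQuot_mk_eq_zero {x : I} : (Submodule.Quotient.mk x : idealQuot I J) = 0 ↔ (x : R) ∈ J :=
  Submodule.Quotient.mk_eq_zero _

/-- The inclusion `L/J → I/J`. -/
noncomputable def idealQuotInclusion (J : Ideal R) (h : L ≤ I) :
    idealQuot L J →ₗ[R] idealQuot I J :=
  Submodule.mapQ _ _ (Submodule.inclusion h) le_rfl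

/-- The projection `I/J → I/L`. -/
noncomputable def idealQuotProj (I : Ideal R) (h : J ≤ L) : idealQuot I J →ₗ[R] idealQuot I L :=
  Submodule.factor (Submodule.comap_mono h)

lemma idealQuotInclusion_injective (h : L ≤ I) :
    Function.Injective (idealQuotInclusion J h) := by
  refine (injective_iff_map_eq_zero _).mpr fun y hy => ?_
  obtain ⟨x, rfl⟩ := Submodule.mkQ_surjective _ y
  have hxJ : (x : R) ∈ J := (idealQuot_mk_eq_zero (I := I)).mp hy
  exact idealQuot_mk_eq_zero.mpr hxJ

lemma idealQuotProj_surjective (h : J ≤ L) : Function.Surjective (idealQuotProj I h) :=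
  Submodule.factor_surjective (Submodule.comap_mono h)

lemma exact_idealQuotInclusion_idealQuotProj (hJL : J ≤ L) (hLI : L ≤ I) :
    Function.Exact (idealQuotInclusion J hLI) (idealQuotProj I hJL) := by
  intro y
  obtain ⟨x, rfl⟩ := Submodule.mkQ_surjective _ y
  constructor
  · intro hx
    have hxL : (x : R) ∈ L := idealQuot_mk_eq_zero.mp hx
    exact ⟨Submodule.Quotient.mk ⟨x, hxL⟩, rfl⟩
  · rintro ⟨z, hz⟩
    obtain ⟨w, rfl⟩ := Submodule.mkQ_surjective _ z
    rw [← hz]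
    exact idealQuot_mk_eq_zero.mpr w.2

/-- The map `R/P → I/J` induced by multiplication by an element `a ∈ I` with `P a ⊆ J`. -/
noncomputable def quotToIdealQuot (ha : a ∈ I) (hP : P ≤ J.colon {a}) :
    (R ⧸ P) →ₗ[R] idealQuot I J :=
  Submodule.liftQ P (Submodule.mkQ _ ∘ₗ LinearMap.toSpanSingleton R I ⟨a, ha⟩) fun _ hp =>
    idealQuot_mk_eq_zero.mpr (Submodule.mem_colon_singleton.mp (hP hp))

lemma quotToIdealQuot_bijective (ha : a ∈ I) (hP : J.colon {a} = P)
    (hI : I = Ideal.span {a} ⊔ J) : Function.Bijective (quotToIdealQuot ha hP.ge) := by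
  constructor
  · refine (injective_iff_map_eq_zero _).mpr fun y hy => ?_
    obtain ⟨p, rfl⟩ := Ideal.Quotient.mk_surjective y
    have hpa : p • a ∈ J := idealQuot_mk_eq_zero.mp hy
    exact Ideal.Quotient.eq_zero_iff_mem.mpr (hP.le (Submodule.mem_colon_singleton.mpr hpa))
  · intro y
    obtain ⟨x, rfl⟩ := Submodule.mkQ_surjective _ y
    obtain ⟨p, b, hb, hx⟩ := Ideal.mem_span_singleton_sup.mp (hI.le x.2)
    refine ⟨Ideal.Quotient.mk P p, sub_eq_zero.mp (idealQuot_mk_eq_zero.mpr ?_)⟩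
    simpa [← hx] using hb

lemma extLength_idealQuot_le (𝔞 : Ideal R) (hJL : J ≤ L) (hLI : L ≤ I) (i : ℕ) :
    extLength 𝔞 (idealQuot I J) i ≤
      extLength 𝔞 (idealQuot L J) i + extLength 𝔞 (idealQuot I L) i :=
  extLength_le_add_of_exact (idealQuotInclusion_injective hLI) (idealQuotProj_surjective hJL)
    (exact_idealQuotInclusion_idealQuotProj hJL hLI) i

lemma extLength_idealQuot_le_succ (𝔞 : Ideal R) (hJL : J ≤ L) (hLI : L ≤ I) (i : ℕ) :
    extLength 𝔞 (idealQuot I L) i ≤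
      extLength 𝔞 (idealQuot I J) i + extLength 𝔞 (idealQuot L J) (i + 1) :=
  extLength_le_add_extLength_succ (idealQuotInclusion_injective hLI)
    (idealQuotProj_surjective hJL) (exact_idealQuotInclusion_idealQuotProj hJL hLI) i

end IdealQuot

section SquarefreeIdeal

variable {K : Type} [Field K] {n d : ℕ} {T U : Finset (Fin n)}

/-- The prime ideal generated by the variables outside `T`, with residue ring
`K[x_i : i ∈ T]`. -/
noncomputable def complPrime (K : Type) [Field K] {n : ℕ} (T : Finset (Fin n)) :
    Ideal (MvPolynomial (Fin n) K) :=
  Ideal.span (X '' {j | j ∉ T})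

lemma mem_complPrime {g : MvPolynomial (Fin n) K} :
    g ∈ complPrime K T ↔ ∀ m ∈ g.support, ∃ j ∉ T, m j ≠ 0 :=
  mem_ideal_span_X_image

lemma X_mem_complPrime {j : Fin n} (hj : j ∉ T) : X j ∈ complPrime K T :=
  Ideal.subset_span ⟨j, hj, rfl⟩

lemma complPrime_anti (h : T ⊆ U) : complPrime K U ≤ complPrime K T :=
  Ideal.span_mono (Set.image_mono fun _ hj hjT => hj (h hjT))

lemma complPrime_empty : complPrime K (∅ : Finset (Fin n)) = maxGraded K n := by
  simp [complPrime, maxGraded]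

lemma complPrime_le_insert_sup (T : Finset (Fin n)) (i : Fin n) :
    complPrime K T ≤ Ideal.span {X i} ⊔ complPrime K (insert i T) := by
  rw [complPrime, Ideal.span_le]
  rintro _ ⟨j, hj, rfl⟩
  obtain rfl | hji := eq_or_ne j i
  · exact Ideal.mem_sup_left (Ideal.mem_span_singleton_self _)
  · exact Ideal.mem_sup_right (X_mem_complPrime (by simp_all))

lemma X_mul_mem_complPrime {i : Fin n} (hi : i ∈ T) {g : MvPolynomial (Fin n) K} :
    X i * g ∈ complPrime K T ↔ g ∈ complPrime K T := by
  refine ⟨fun h => mem_complPrime.mpr fun m hm => ?_, Ideal.mul_mem_left _ _⟩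
  obtain ⟨j, hj, hmj⟩ := mem_complPrime.mp h (Finsupp.single i 1 + m) (by
    rw [support_X_mul]
    exact Finset.mem_map_of_mem _ hm)
  have hij : i ≠ j := ne_of_mem_of_not_mem hi hj
  exact ⟨j, hj, by simpa [hij] using hmj⟩

lemma sqMon_mul_mem_complPrime (h : U ⊆ T) {g : MvPolynomial (Fin n) K} :
    sqMon K U * g ∈ complPrime K T ↔ g ∈ complPrime K T := by
  induction U using Finset.induction_on with
  | empty => simp [sqMon]
  | insert a U ha ih =>
    rw [Finset.insert_subset_iff] at h
    rw [sqMon, Finset.prod_insert ha, mul_assoc, X_mul_mem_complPrime h.1]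
    exact ih h.2

lemma sqMon_mem_complPrime : sqMon K U ∈ complPrime K T ↔ ¬ U ⊆ T := by
  refine ⟨fun hU hUT => ?_, fun hU => ?_⟩
  · rw [← mul_one (sqMon K U), sqMon_mul_mem_complPrime hUT, mem_complPrime] at hU
    simp at hU
  · obtain ⟨j, hjU, hjT⟩ := Finset.not_subset.mp hU
    exact Ideal.mem_of_dvd _ (Finset.dvd_prod_of_mem X hjU) (X_mem_complPrime hjT)

lemma maxGraded_eq_ker_constantCoeff :
    maxGraded K n = RingHom.ker (constantCoeff (σ := Fin n) (R := K)) := by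
  ext g
  rw [maxGraded, ← idealOfVars, ← pow_one (idealOfVars _ _), mem_pow_idealOfVars_iff']
  simp [constantCoeff_eq, Finsupp.degree_eq_zero_iff]

instance maxGraded_isMaximal : (maxGraded K n).IsMaximal := by
  rw [maxGraded_eq_ker_constantCoeff]
  exact RingHom.ker_isMaximal_of_surjective _ fun x => ⟨C x, constantCoeff_C _ x⟩

lemma isSMulRegular_quotient_complPrime {i : Fin n} (hi : i ∈ T) :
    IsSMulRegular (MvPolynomial (Fin n) K ⧸ complPrime K T) (X i : MvPolynomial (Fin n) K) := by
  refine isSMulRegular_iff_right_eq_zero_of_smul.mpr fun y hy => ?_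
  obtain ⟨g, rfl⟩ := Ideal.Quotient.mk_surjective y
  have hg : X i * g ∈ complPrime K T := Ideal.Quotient.eq_zero_iff_mem.mp hy
  exact Ideal.Quotient.eq_zero_iff_mem.mpr ((X_mul_mem_complPrime hi).mp hg)

lemma exact_lsmul_factor_complPrime {i : Fin n} (hi : i ∉ T) :
    Function.Exact
      (LinearMap.lsmul (MvPolynomial (Fin n) K)
        (MvPolynomial (Fin n) K ⧸ complPrime K (insert i T)) (X i))
      (Submodule.factor (complPrime_anti (Finset.subset_insert i T))) := by
  intro y
  obtain ⟨g, rfl⟩ := Ideal.Quotient.mk_surjective y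
  constructor
  · intro hg
    have hgT : g ∈ complPrime K T := Ideal.Quotient.eq_zero_iff_mem.mp hg
    obtain ⟨c, b, hb, rfl⟩ := Ideal.mem_span_singleton_sup.mp (complPrime_le_insert_sup T i hgT)
    refine ⟨Ideal.Quotient.mk _ c, Ideal.Quotient.eq.mpr ?_⟩
    simpa [mul_comm] using hb
  · rintro ⟨z, hz⟩
    obtain ⟨c, rfl⟩ := Ideal.Quotient.mk_surjective z
    rw [← hz]
    exact Ideal.Quotient.eq_zero_iff_mem.mpr (Ideal.mul_mem_right _ _ (X_mem_complPrime hi))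

lemma extLength_quotient_complPrime {i : ℕ} (hi : i ≤ T.card) :
    extLength (maxGraded K n) (MvPolynomial (Fin n) K ⧸ complPrime K T) i =
      if T.card = i then 1 else 0 := by
  induction T using Finset.induction_on generalizing i with
  | empty =>
    obtain rfl : i = 0 := by simpa using hi
    rw [complPrime_empty, extLength_quotient_zero, Finset.card_empty, if_pos rfl]
  | insert a T ha ih =>
    have hX : X a ∈ maxGraded K n := Ideal.subset_span ⟨a, rfl⟩
    have hreg := isSMulRegular_quotient_complPrime (K := K) (Finset.mem_insert_self a T)
    have hstep := extLength_eq_add_of_exact_lsmul hX hreg (Submodule.factor_surjective _)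
      (exact_lsmul_factor_complPrime ha)
    rw [Finset.card_insert_of_notMem ha] at hi ⊢
    induction i with
    | zero => rw [extLength_zero_of_isSMulRegular hX hreg, if_neg (Nat.succ_ne_zero _)]
    | succ i ih_succ =>
      have hzero := ih_succ (by lia)
      rw [if_neg (by lia)] at hzero
      have hsum := hstep i
      rw [hzero, zero_add, ih (by lia)] at hsum
      rw [← hsum]
      simp only [add_left_inj]

lemma span_sqMon_le_complPrime {G : Set (Finset (Fin n))} (h : ∀ U ∈ G, ¬ U ⊆ T) :
    Ideal.span (sqMon K '' G) ≤ complPrime K T := by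
  rw [Ideal.span_le]
  rintro _ ⟨U, hU, rfl⟩
  exact sqMon_mem_complPrime.mpr (h U hU)

/-- The square-free monomial ideal generated by the monomials with supports in `𝓖`. -/
noncomputable def sqIdeal (K : Type) [Field K] {n : ℕ} (𝓖 : Finset (Finset (Fin n))) :
    Ideal (MvPolynomial (Fin n) K) :=
  Ideal.span (sqMon K '' 𝓖)

variable {𝓖 𝓘 𝓙 : Finset (Finset (Fin n))}

lemma sqMon_mem_sqIdeal_of_mem (h : T ∈ 𝓖) : sqMon K T ∈ sqIdeal K 𝓖 :=
  Ideal.subset_span ⟨T, h, rfl⟩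

lemma sqIdeal_mono (h : 𝓙 ⊆ 𝓘) : sqIdeal K 𝓙 ≤ sqIdeal K 𝓘 :=
  Ideal.span_mono (Set.image_mono h)

lemma sqIdeal_eq_span_sup_erase (h : T ∈ 𝓘) :
    sqIdeal K 𝓘 = Ideal.span {sqMon K T} ⊔ sqIdeal K (𝓘.erase T) := by
  rw [sqIdeal, sqIdeal, ← Ideal.span_insert, ← Set.image_insert_eq, ← Finset.coe_insert,
    Finset.insert_erase h]

lemma complPrime_le_colon_sqMon (h : ∀ j ∉ T, insert j T ∈ 𝓖) :
    complPrime K T ≤ (sqIdeal K 𝓖).colon {sqMon K T} := by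
  rw [complPrime, Ideal.span_le]
  rintro _ ⟨j, hj, rfl⟩
  have hmem := sqMon_mem_sqIdeal_of_mem (K := K) (h j hj)
  rw [sqMon, Finset.prod_insert hj] at hmem
  exact Submodule.mem_colon_singleton.mpr hmem

lemma colon_sqMon_eq_complPrime (hT : ∀ U ∈ 𝓖, ¬ U ⊆ T) (h : ∀ j ∉ T, insert j T ∈ 𝓖) :
    (sqIdeal K 𝓖).colon {sqMon K T} = complPrime K T := by
  refine le_antisymm (fun g hg => ?_) (complPrime_le_colon_sqMon h)
  have hmem := span_sqMon_le_complPrime hT (Submodule.mem_colon_singleton.mp hg)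
  rwa [smul_eq_mul, mul_comm, sqMon_mul_mem_complPrime subset_rfl] at hmem

lemma insert_mem_erase (h𝓘 : IsUpperSet (𝓘 : Set (Finset (Fin n)))) (hT : T ∈ 𝓘) {j : Fin n}
    (hj : j ∉ T) : insert j T ∈ 𝓘.erase T :=
  Finset.mem_erase.mpr ⟨(Finset.ssubset_insert hj).ne', h𝓘 (Finset.subset_insert j T) hT⟩

lemma minimal_mem_of_minimal_mem_sdiff (h𝓙 : IsUpperSet (𝓙 : Set (Finset (Fin n))))
    (hT : Minimal (· ∈ 𝓘 \ 𝓙) T) : Minimal (· ∈ 𝓘) T := by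
  obtain ⟨hT𝓘, hT𝓙⟩ := Finset.mem_sdiff.mp hT.prop
  exact ⟨hT𝓘, fun U hU hUT =>
    hT.le_of_le (Finset.mem_sdiff.mpr ⟨hU, fun hU𝓙 => hT𝓙 (h𝓙 hUT hU𝓙)⟩) hUT⟩

/-- For a minimal element `T` of an upper set `𝓘`, the isomorphism `S/P_T ≅ I/I'` sending `1` to
the monomial of `T`, where `I'` is generated by the other monomials of `I`. -/
noncomputable def quotComplPrimeEquiv (h𝓘 : IsUpperSet (𝓘 : Set (Finset (Fin n))))
    (hT : Minimal (· ∈ 𝓘) T) :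
    (MvPolynomial (Fin n) K ⧸ complPrime K T) ≃ₗ[MvPolynomial (Fin n) K]
      idealQuot (sqIdeal K 𝓘) (sqIdeal K (𝓘.erase T)) :=
  .ofBijective _ <| quotToIdealQuot_bijective (sqMon_mem_sqIdeal_of_mem hT.prop)
    (colon_sqMon_eq_complPrime
      (fun _ hU hUT => Finset.ne_of_mem_erase hU
        (hT.eq_of_le (Finset.mem_of_mem_erase hU) hUT))
      fun _ hj => insert_mem_erase h𝓘 hT.prop hj)
    (sqIdeal_eq_span_sup_erase hT.prop)

lemma extLength_idealQuot_sqIdeal_le (h𝓘 : IsUpperSet (𝓘 : Set (Finset (Fin n))))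
    (h𝓙 : IsUpperSet (𝓙 : Set (Finset (Fin n)))) (h𝓙𝓘 : 𝓙 ⊆ 𝓘)
    (𝔞 : Ideal (MvPolynomial (Fin n) K)) (i : ℕ) :
    extLength 𝔞 (idealQuot (sqIdeal K 𝓘) (sqIdeal K 𝓙)) i ≤
      ∑ T ∈ 𝓘 \ 𝓙, extLength 𝔞 (MvPolynomial (Fin n) K ⧸ complPrime K T) i := by
  induction 𝓘 using Finset.strongInduction with
  | H 𝓘 ih =>
    obtain h | h := (𝓘 \ 𝓙).eq_empty_or_nonempty
    · obtain rfl := (Finset.sdiff_eq_empty_iff_subset.mp h).antisymm h𝓙𝓘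
      have : Subsingleton (idealQuot (sqIdeal K 𝓘) (sqIdeal K 𝓘)) :=
        Submodule.Quotient.subsingleton_iff.mpr (Submodule.comap_subtype_self _)
      rw [extLength_eq_zero_of_subsingleton]
      exact zero_le
    · obtain ⟨T, hT⟩ := (𝓘 \ 𝓙).exists_minimal h
      obtain ⟨hT𝓘, hT𝓙⟩ := Finset.mem_sdiff.mp hT.prop
      have hTmin : Minimal (· ∈ 𝓘) T := minimal_mem_of_minimal_mem_sdiff h𝓙 hT
      have h𝓙erase : 𝓙 ⊆ 𝓘.erase T := Finset.subset_erase.mpr ⟨h𝓙𝓘, hT𝓙⟩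
      have herase : IsUpperSet (𝓘.erase T : Set (Finset (Fin n))) := by
        rw [Finset.coe_erase]
        exact h𝓘.erase fun U hU hUT => hTmin.eq_of_le hU hUT
      have hstep := extLength_idealQuot_le 𝔞 (sqIdeal_mono (K := K) h𝓙erase)
        (sqIdeal_mono (𝓘.erase_subset T)) i
      rw [← extLength_congr (quotComplPrimeEquiv h𝓘 hTmin)] at hstep
      rw [← Finset.sum_erase_add _ _ hT.prop, ← Finset.erase_sdiff_comm]
      exact hstep.trans (add_le_add_left (ih _ (Finset.erase_ssubset hT𝓘) herase h𝓙erase) _)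

lemma insert_mem_of_isAntichain_sdiff (h𝓘 : IsUpperSet (𝓘 : Set (Finset (Fin n))))
    (hanti : IsAntichain (· ⊆ ·) ((𝓘 \ 𝓙 : Finset _) : Set (Finset (Fin n)))) (hT : T ∈ 𝓘 \ 𝓙)
    {j : Fin n} (hj : j ∉ T) : insert j T ∈ 𝓙 := by
  by_contra hins
  have hins𝓘 := h𝓘 (Finset.subset_insert j T) (Finset.mem_sdiff.mp hT).1
  exact hj (Finset.insert_eq_self.mp
    (hanti.eq hT (Finset.mem_sdiff.mpr ⟨hins𝓘, hins⟩) (Finset.subset_insert j T)).symm)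

lemma sum_extLength_le_idealQuot_sqIdeal (h𝓘 : IsUpperSet (𝓘 : Set (Finset (Fin n))))
    (h𝓙 : IsUpperSet (𝓙 : Set (Finset (Fin n))))
    (h𝓙𝓘 : 𝓙 ⊆ 𝓘) (hanti : IsAntichain (· ⊆ ·) ((𝓘 \ 𝓙 : Finset _) : Set (Finset (Fin n))))
    (𝔞 : Ideal (MvPolynomial (Fin n) K)) (i : ℕ) :
    ∑ T ∈ 𝓘 \ 𝓙, extLength 𝔞 (MvPolynomial (Fin n) K ⧸ complPrime K T) i ≤
      extLength 𝔞 (idealQuot (sqIdeal K 𝓘) (sqIdeal K 𝓙)) i := by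
  have hmin (T : Finset (Fin n)) (hT : T ∈ 𝓘 \ 𝓙) : Minimal (· ∈ 𝓘) T :=
    minimal_mem_of_minimal_mem_sdiff h𝓙 (hanti.minimal_mem_iff.mpr hT)
  have hsub (T : Finset (Fin n)) (hT : T ∈ 𝓘 \ 𝓙) : 𝓙 ⊆ 𝓘.erase T :=
    Finset.subset_erase.mpr ⟨h𝓙𝓘, (Finset.mem_sdiff.mp hT).2⟩
  let f (T : ↥(𝓘 \ 𝓙)) := quotToIdealQuot (sqMon_mem_sqIdeal_of_mem (hmin T T.2).prop)
    (complPrime_le_colon_sqMon (K := K) fun _ => insert_mem_of_isAntichain_sdiff h𝓘 hanti T.2)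
  let g (T : ↥(𝓘 \ 𝓙)) := (quotComplPrimeEquiv h𝓘 (hmin T T.2)).symm.toLinearMap ∘ₗ
    idealQuotProj (sqIdeal K 𝓘) (sqIdeal_mono (hsub T T.2))
  rw [← Finset.sum_coe_sort]
  refine sum_extLength_le f g (fun T => ?_) fun T U hTU => ?_
  · refine Submodule.linearMap_qext _ (LinearMap.ext_ring ?_)
    have hone : idealQuotProj (sqIdeal K 𝓘) (sqIdeal_mono (hsub T T.2)) (f T 1) =
      quotComplPrimeEquiv h𝓘 (hmin T T.2) 1 := rfl
    exact (congrArg (quotComplPrimeEquiv h𝓘 (hmin T T.2)).symm hone).trans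
      (LinearEquiv.symm_apply_apply _ 1)
  · refine Submodule.linearMap_qext _ (LinearMap.ext_ring ?_)
    have hmem : (1 : MvPolynomial (Fin n) K) • sqMon K ↑U ∈ sqIdeal K (𝓘.erase T) := by
      rw [one_smul]
      exact sqMon_mem_sqIdeal_of_mem (Finset.mem_erase.mpr
        ⟨fun hUT => hTU (Subtype.ext hUT.symm), (hmin U U.2).prop⟩)
    have hzero : idealQuotProj (sqIdeal K 𝓘) (sqIdeal_mono (hsub T T.2)) (f U 1) = 0 :=
      (idealQuot_mk_eq_zero (I := sqIdeal K 𝓘)).mpr hmem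
    exact (congrArg (quotComplPrimeEquiv h𝓘 (hmin T T.2)).symm hzero).trans (map_zero _)

lemma extLength_idealQuot_sqIdeal_le_card (h𝓘 : IsUpperSet (𝓘 : Set (Finset (Fin n))))
    (h𝓙 : IsUpperSet (𝓙 : Set (Finset (Fin n)))) (h𝓙𝓘 : 𝓙 ⊆ 𝓘) (h : ∀ T ∈ 𝓘 \ 𝓙, d ≤ T.card) :
    extLength (maxGraded K n) (idealQuot (sqIdeal K 𝓘) (sqIdeal K 𝓙)) d ≤
      {T ∈ 𝓘 \ 𝓙 | T.card = d}.card := by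
  refine (extLength_idealQuot_sqIdeal_le h𝓘 h𝓙 h𝓙𝓘 _ d).trans_eq ?_
  rw [Finset.sum_congr rfl fun T hT => extLength_quotient_complPrime (h T hT), Finset.sum_boole]

lemma card_le_extLength_idealQuot_sqIdeal (h𝓘 : IsUpperSet (𝓘 : Set (Finset (Fin n))))
    (h𝓙 : IsUpperSet (𝓙 : Set (Finset (Fin n)))) (h𝓙𝓘 : 𝓙 ⊆ 𝓘) (h : ∀ T ∈ 𝓘 \ 𝓙, T.card = d) :
    ((𝓘 \ 𝓙).card : ℕ∞) ≤
      extLength (maxGraded K n) (idealQuot (sqIdeal K 𝓘) (sqIdeal K 𝓙)) d := by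
  have hanti : IsAntichain (· ⊆ ·) ((𝓘 \ 𝓙 : Finset _) : Set (Finset (Fin n))) :=
    Set.Sized.isAntichain h
  refine Eq.trans_le ?_ (sum_extLength_le_idealQuot_sqIdeal h𝓘 h𝓙 h𝓙𝓘 hanti _ d)
  rw [Finset.sum_congr rfl fun T hT => extLength_quotient_complPrime (h T hT).ge,
    Finset.sum_boole, Finset.filter_true_of_mem h]

/-- The sequence `Ext^d(I/J) → Ext^d(I/L) → Ext^{d+1}(L/J)` is exact, where `L` is generated by `J`
and the square-free monomials of degree `> d` in `I`. -/
lemma card_le_extLength_add_card (h𝓘 : IsUpperSet (𝓘 : Set (Finset (Fin n))))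
    (h𝓙 : IsUpperSet (𝓙 : Set (Finset (Fin n)))) (h𝓙𝓘 : 𝓙 ⊆ 𝓘) (h : ∀ T ∈ 𝓘 \ 𝓙, d ≤ T.card) :
    ({T ∈ 𝓘 \ 𝓙 | T.card = d}.card : ℕ∞) ≤
      extLength (maxGraded K n) (idealQuot (sqIdeal K 𝓘) (sqIdeal K 𝓙)) d +
        {T ∈ 𝓘 \ 𝓙 | T.card = d + 1}.card := by
  let 𝓛 : Finset (Finset (Fin n)) := {T ∈ 𝓘 | T ∈ 𝓙 ∨ d < T.card}
  have h𝓙𝓛 : 𝓙 ⊆ 𝓛 := fun T hT => Finset.mem_filter.mpr ⟨h𝓙𝓘 hT, .inl hT⟩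
  have h𝓛𝓘 : 𝓛 ⊆ 𝓘 := Finset.filter_subset _ _
  have h𝓛 : IsUpperSet (𝓛 : Set (Finset (Fin n))) := by
    intro T U hTU hT
    obtain ⟨hT𝓘, hT⟩ := Finset.mem_filter.mp hT
    exact Finset.mem_filter.mpr ⟨h𝓘 hTU hT𝓘,
      hT.imp (fun hT𝓙 => h𝓙 hTU hT𝓙) fun hlt => hlt.trans_le (Finset.card_le_card hTU)⟩
  have hsdiff : 𝓘 \ 𝓛 = {T ∈ 𝓘 \ 𝓙 | T.card = d} := by grind
  have hcard : ∀ T ∈ 𝓘 \ 𝓛, T.card = d := by grind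
  have hcard_succ : ∀ T ∈ 𝓛 \ 𝓙, d + 1 ≤ T.card := by grind
  have hsubset : {T ∈ 𝓛 \ 𝓙 | T.card = d + 1} ⊆ {T ∈ 𝓘 \ 𝓙 | T.card = d + 1} := by grind
  calc ({T ∈ 𝓘 \ 𝓙 | T.card = d}.card : ℕ∞)
      ≤ extLength (maxGraded K n) (idealQuot (sqIdeal K 𝓘) (sqIdeal K 𝓛)) d :=
        hsdiff ▸ card_le_extLength_idealQuot_sqIdeal h𝓘 h𝓛 h𝓛𝓘 hcard
    _ ≤ _ := extLength_idealQuot_le_succ _ (sqIdeal_mono h𝓙𝓛) (sqIdeal_mono h𝓛𝓘) d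
    _ ≤ _ := add_le_add_right
        ((extLength_idealQuot_sqIdeal_le_card h𝓛 h𝓙 h𝓙𝓛 hcard_succ).trans
          (Nat.cast_le.mpr (Finset.card_le_card hsubset))) _

theorem moduleDepth_idealQuot_sqIdeal (h𝓘 : IsUpperSet (𝓘 : Set (Finset (Fin n))))
    (h𝓙 : IsUpperSet (𝓙 : Set (Finset (Fin n)))) (h𝓙𝓘 : 𝓙 ⊆ 𝓘) (h : ∀ T ∈ 𝓘 \ 𝓙, d ≤ T.card)
    (hlt : {T ∈ 𝓘 \ 𝓙 | T.card = d + 1}.card < {T ∈ 𝓘 \ 𝓙 | T.card = d}.card) :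
    moduleDepth (maxGraded K n) (idealQuot (sqIdeal K 𝓘) (sqIdeal K 𝓙)) = d := by
  refine moduleDepth_eq_of_extLength (fun i hi => ?_) fun hzero => ?_
  · have hle := extLength_idealQuot_sqIdeal_le_card (K := K) h𝓘 h𝓙 h𝓙𝓘
      fun T hT => hi.le.trans (h T hT)
    rwa [Finset.filter_false_of_mem fun T hT => (hi.trans_le (h T hT)).ne', Finset.card_empty,
      Nat.cast_zero, nonpos_iff_eq_zero] at hle
  · have hle := card_le_extLength_add_card (K := K) h𝓘 h𝓙 h𝓙𝓘 h
    rw [hzero, zero_add, Nat.cast_le] at hle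
    exact hle.not_gt hlt

end SquarefreeIdeal

section SquarefreeSupport

variable {K : Type} [Field K] {n d : ℕ} {T : Finset (Fin n)} {P : ℕ → Prop}
  {I J : Ideal (MvPolynomial (Fin n) K)}

lemma sqMon_mem_span_sqMon {G : Set (Finset (Fin n))} :
    sqMon K T ∈ Ideal.span (sqMon K '' G) ↔ ∃ U ∈ G, U ⊆ T := by
  refine ⟨fun hT => ?_, fun ⟨U, hU, hUT⟩ => ?_⟩
  · by_contra! h
    exact sqMon_mem_complPrime.mp (span_sqMon_le_complPrime h hT) subset_rfl
  · exact Ideal.mem_of_dvd _ (Finset.prod_dvd_prod_of_subset U T _ hUT)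
      (Ideal.subset_span ⟨U, hU, rfl⟩)

open Classical in
/-- The supports of the square-free monomials in `I`. -/
noncomputable def sqSupport (I : Ideal (MvPolynomial (Fin n) K)) : Finset (Finset (Fin n)) :=
  {T | sqMon K T ∈ I}

lemma mem_sqSupport : T ∈ sqSupport I ↔ sqMon K T ∈ I := by
  simp [sqSupport]

lemma isUpperSet_sqSupport (I : Ideal (MvPolynomial (Fin n) K)) :
    IsUpperSet (sqSupport I : Set (Finset (Fin n))) := fun T U hTU hT =>
  mem_sqSupport.mpr <|
    Ideal.mem_of_dvd _ (Finset.prod_dvd_prod_of_subset T U _ hTU) (mem_sqSupport.mp hT)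

lemma sqSupport_mono (h : J ≤ I) : sqSupport J ⊆ sqSupport I := fun _ hT =>
  mem_sqSupport.mpr (h (mem_sqSupport.mp hT))

lemma sqIdeal_sqSupport (h : GenBySqMonOfDeg K P I) : sqIdeal K (sqSupport I) = I := by
  obtain ⟨G, -, hI⟩ := h
  refine le_antisymm ?_ (hI.le.trans (Ideal.span_mono (Set.image_mono fun T hT => ?_)))
  · rw [sqIdeal, Ideal.span_le]
    rintro _ ⟨T, hT, rfl⟩
    exact mem_sqSupport.mp hT
  · exact mem_sqSupport.mpr (hI.ge (Ideal.subset_span ⟨T, hT, rfl⟩))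

lemma le_card_of_sqMon_mem (h : GenBySqMonOfDeg K (d ≤ ·) I) (hT : sqMon K T ∈ I) :
    d ≤ T.card := by
  obtain ⟨G, hG, rfl⟩ := h
  obtain ⟨U, hU, hUT⟩ := sqMon_mem_span_sqMon.mp hT
  exact (hG U hU).trans (Finset.card_le_card hUT)

theorem stmt_7_general (hJI : J ≤ I) (hI : GenBySqMonOfDeg K (d ≤ ·) I)
    (hJ : GenBySqMonOfDeg K (d + 1 ≤ ·) J)
    (h : Set.ncard {T : Finset (Fin n) | T.card = d + 1 ∧ sqMon K T ∈ I ∧ sqMon K T ∉ J} <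
      rho K d I) :
    moduleDepth (maxGraded K n) (idealQuot I J) = d := by
  have hrho : rho K d I = {T ∈ sqSupport I \ sqSupport J | T.card = d}.card := by
    rw [rho, ← Set.ncard_coe_finset]
    congr 1 with T
    have hTJ : sqMon K T ∈ J → d + 1 ≤ T.card := le_card_of_sqMon_mem hJ
    simp only [Finset.coe_filter, Finset.mem_sdiff, mem_sqSupport, Set.mem_ofPred_eq]
    grind
  have hncard : Set.ncard {T : Finset (Fin n) | T.card = d + 1 ∧ sqMon K T ∈ I ∧ sqMon K T ∉ J} =
      {T ∈ sqSupport I \ sqSupport J | T.card = d + 1}.card := by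
    rw [← Set.ncard_coe_finset]
    congr 1 with T
    simp [mem_sqSupport, and_comm]
  rw [hrho, hncard] at h
  have hdepth := moduleDepth_idealQuot_sqIdeal (K := K) (isUpperSet_sqSupport I)
    (isUpperSet_sqSupport J) (sqSupport_mono hJI)
    (fun T hT => le_card_of_sqMon_mem hI (mem_sqSupport.mp (Finset.mem_sdiff.mp hT).1)) h
  rwa [sqIdeal_sqSupport hI, sqIdeal_sqSupport hJ] at hdepth

lemma le_rho_of_injective {r : ℕ} {f : Fin r → Finset (Fin n)} (hf : Function.Injective f)
    (hfd : ∀ i, (f i).card = d) (hfI : ∀ i, sqMon K (f i) ∈ I) : r ≤ rho K d I := by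
  calc r = (Set.range f).ncard := by simp [Set.ncard_range_of_injective hf]
    _ ≤ rho K d I := Set.ncard_le_ncard (Set.range_subset_iff.mpr fun i => ⟨hfd i, hfI i⟩)

end SquarefreeSupport

/-- Corollary 1.11. -/
theorem stmt_7 (n : ℕ) (K : Type) [Field K] (d : ℕ) (hd : 0 < d)
    (I J : Ideal (MvPolynomial (Fin n) K)) (hJ0 : J ≠ ⊥) (hJI : J < I)
    (r : ℕ) (hr : 0 < r) (f : Fin r → Finset (Fin n)) (hfinj : Function.Injective f)
    (hfd : ∀ i, (f i).card = d)
    (hIgen : I = Ideal.span (Set.range fun i => sqMon K (f i)))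
    (hJgen : GenBySqMonOfDeg K (fun k => k = d + 1) J)
    (s : ℕ)
    (hs : s = Set.ncard {T : Finset (Fin n) |
      T.card = d + 1 ∧ sqMon K T ∈ I ∧ sqMon K T ∉ J})
    (hrs : s < r) (hs1 : s ≤ 1) :
    moduleDepth (maxGraded K n) (idealQuot I J) = (d : ℕ∞) := by
  have hI : GenBySqMonOfDeg K (d ≤ ·) I :=
    ⟨Set.range f, Set.forall_mem_range.mpr fun i => (hfd i).ge,
      hIgen.trans (congrArg Ideal.span (Set.range_comp (sqMon K) f))⟩
  have hJ : GenBySqMonOfDeg K (d + 1 ≤ ·) J :=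
    let ⟨G, hG, hJ⟩ := hJgen
    ⟨G, fun T hT => (hG T hT).ge, hJ⟩
  have hr_le : r ≤ rho K d I :=
    le_rho_of_injective hfinj hfd fun i => hIgen ▸ Ideal.subset_span ⟨i, rfl⟩
  exact stmt_7_general hJI.le hI hJ (hs ▸ hrs.trans_le hr_le)
end

section
/- Let s be the number of square-free monomials of degree d+1 lying in I \ J. If r > s and s = 2, then depth_S (I/J) = d. -/
open MvPolynomial

/-!
The depth of `I/J` is the least `k` for which the Koszul cohomology `H^k(X; I/J)` is nonzero.

For `k < d` this cohomology vanishes: lowering exponents that are at least `2` does not change the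
support of a monomial, hence preserves `I` and `J`, and makes every `k`-cocycle cohomologous to one
whose `e_T`-coefficient involves only monomials supported on `T`. But monomials of `I` have at least
`d > k` variables.

For `k = d`, consider the cochains `∑ c_T x_T e_T` with scalars `c_T` and `x_T` running through the
square-free monomials of degree `d` in `I`. Being a cocycle is one linear condition on `c` for each
square-free monomial of degree `d + 1` in `I \ J`, so there is a nonzero cocycle of this form. It is
not a coboundary, as the coefficients of coboundaries lie in `𝔪 (I/J)`, where `𝔪 = (x_1, …, x_n)`.
-/

section KoszulComplex

open scoped Finset Pointwise

variable {ι : Type*} [LinearOrder ι]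

/-- The sign of the permutation sorting `e_i ∧ e_T`, where `e_T` is the exterior product of the
`e_j`, `j ∈ T`, in increasing order. -/
def koszulSign (i : ι) (T : Finset ι) : ℤ :=
  (-1) ^ #{j ∈ T | j < i}

lemma koszulSign_mul_self (i : ι) (T : Finset ι) : koszulSign i T * koszulSign i T = 1 := by
  rw [koszulSign, ← mul_pow, neg_one_mul, neg_neg, one_pow]

lemma koszulSign_smul_smul_self {M : Type*} [AddCommGroup M] (i : ι) (T : Finset ι) (m : M) :
    koszulSign i T • koszulSign i T • m = m := by
  rw [smul_smul, koszulSign_mul_self, one_smul]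

lemma koszulSign_insert_of_le {i j : ι} (hij : i ≤ j) (T : Finset ι) :
    koszulSign i (insert j T) = koszulSign i T := by
  rw [koszulSign, Finset.filter_insert, if_neg hij.not_gt, koszulSign]

lemma koszulSign_insert_of_lt {i j : ι} (hji : j < i) {T : Finset ι} (hj : j ∉ T) :
    koszulSign i (insert j T) = -koszulSign i T := by
  rw [koszulSign, Finset.filter_insert, if_pos hji,
    Finset.card_insert_of_notMem (by simp [hj]), pow_succ, mul_neg_one, koszulSign]

lemma koszulSign_erase_of_le {i j : ι} (hij : i ≤ j) {T : Finset ι} (hj : j ∈ T) :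
    koszulSign i (T.erase j) = koszulSign i T := by
  rw [← koszulSign_insert_of_le hij (T.erase j), Finset.insert_erase hj]

lemma koszulSign_erase_of_lt {i j : ι} (hji : j < i) {T : Finset ι} (hj : j ∈ T) :
    koszulSign i (T.erase j) = -koszulSign i T := by
  rw [← neg_eq_iff_eq_neg, ← koszulSign_insert_of_lt hji (T.notMem_erase j),
    Finset.insert_erase hj]

lemma koszulSign_mul_koszulSign_erase {i j : ι} (hij : i ≠ j) {T : Finset ι} (hi : i ∈ T)
    (hj : j ∈ T) :
    koszulSign i T * koszulSign j (T.erase i) = -(koszulSign j T * koszulSign i (T.erase j)) := by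
  rcases hij.lt_or_gt with h | h
  · rw [koszulSign_erase_of_lt h hi, koszulSign_erase_of_le h.le hj]; ring
  · rw [koszulSign_erase_of_le h.le hi, koszulSign_erase_of_lt h hj]; ring

lemma koszulSign_mul_koszulSign_insert {i j : ι} {T : Finset ι} (hi : i ∈ T) (hj : j ∉ T) :
    koszulSign j T * koszulSign i (insert j T) = -(koszulSign i T * koszulSign j (T.erase i)) := by
  rcases (ne_of_mem_of_not_mem hi hj).lt_or_gt with h | h
  · rw [koszulSign_erase_of_lt h hi, koszulSign_insert_of_le h.le]; ring
  · rw [koszulSign_erase_of_le h.le hi, koszulSign_insert_of_lt h hj]; ring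

variable {R : Type*} [CommRing R] {M N : Type*} [AddCommGroup M] [Module R M]
  [AddCommGroup N] [Module R N]

/-- The differential `φ ↦ (∑ i, x i e_i) ∧ φ` of the Koszul cochain complex `K(x; M)`. A cochain is
encoded by its coefficients `φ T` at all the `e_T`; those with `#T = k` form its component of
degree `k`. -/
def koszulDiff (x : ι → R) : (Finset ι → M) →ₗ[R] (Finset ι → M) where
  toFun φ T := ∑ i ∈ T, koszulSign i T • x i • φ (T.erase i)
  map_add' φ ψ := by
    funext T
    simp only [Pi.add_apply, smul_add, Finset.sum_add_distrib]
  map_smul' a φ := by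
    funext T
    simp only [Pi.smul_apply, RingHom.id_apply, Finset.smul_sum, smul_comm a]

lemma koszulDiff_apply (x : ι → R) (φ : Finset ι → M) (T : Finset ι) :
    koszulDiff x φ T = ∑ i ∈ T, koszulSign i T • x i • φ (T.erase i) := rfl

lemma koszulDiff_empty (x : ι → R) (φ : Finset ι → M) : koszulDiff x φ ∅ = 0 := by
  rw [koszulDiff_apply, Finset.sum_empty]

lemma koszulDiff_congr (x : ι → R) {k : ℕ} {φ ψ : Finset ι → M}
    (h : ∀ T, #T = k → φ T = ψ T) {T : Finset ι} (hT : #T = k + 1) :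
    koszulDiff x φ T = koszulDiff x ψ T :=
  Finset.sum_congr rfl fun i hi ↦ by rw [h _ (by rw [Finset.card_erase_of_mem hi, hT]; rfl)]

lemma koszulDiff_comp_linearMap (x : ι → R) (f : M →ₗ[R] N) (φ : Finset ι → M) :
    koszulDiff x (f ∘ φ) = f ∘ koszulDiff x φ := by
  funext T
  simp only [koszulDiff_apply, Function.comp_apply, map_sum, map_zsmul, map_smul]

lemma coe_koszulDiff (x : ι → R) (N : Submodule R M) (φ : Finset ι → N) (T : Finset ι) :
    ((koszulDiff x φ T : N) : M) = koszulDiff x (fun S ↦ (φ S : M)) T :=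
  congrFun (koszulDiff_comp_linearMap x N.subtype φ).symm T

lemma koszulDiff_mem_span_smul_top (x : ι → R) (φ : Finset ι → M) (T : Finset ι) :
    koszulDiff x φ T ∈ Ideal.span (Set.range x) • (⊤ : Submodule R M) :=
  sum_mem fun i _ ↦ zsmul_mem
    (Submodule.smul_mem_smul (Ideal.subset_span (Set.mem_range_self i)) Submodule.mem_top) _

lemma koszulDiff_koszulDiff (x : ι → R) (φ : Finset ι → M) :
    koszulDiff x (koszulDiff x φ) = 0 := by
  funext T
  simp only [koszulDiff_apply, Finset.smul_sum, Finset.sum_sigma', Pi.zero_apply]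
  refine Finset.sum_involution (fun p _ ↦ ⟨p.2, p.1⟩) ?_ ?_ ?_ (fun _ _ ↦ rfl)
  · rintro ⟨i, j⟩ hij
    obtain ⟨hi, hji, hj⟩ : i ∈ T ∧ j ≠ i ∧ j ∈ T := by simpa using hij
    dsimp only
    rw [smul_comm (x i) (koszulSign j _), smul_comm (x j) (koszulSign i _),
      smul_smul (koszulSign i T), koszulSign_mul_koszulSign_erase hji.symm hi hj, neg_smul,
      ← smul_smul, smul_comm (x i), Finset.erase_right_comm, neg_add_cancel]
  · rintro ⟨i, j⟩ hij - h
    have hji : j ≠ i := by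
      simp only [Finset.mem_sigma, Finset.mem_erase] at hij
      exact hij.2.1
    exact hji (congrArg Sigma.fst h)
  · rintro ⟨i, j⟩ hij
    simp only [Finset.mem_sigma, Finset.mem_erase] at hij ⊢
    exact ⟨hij.2.2, hij.2.1.symm, hij.1⟩

/-- Interior multiplication of Koszul cochains by the `j`-th dual basis vector. -/
def koszulContraction (j : ι) (φ : Finset ι → M) (T : Finset ι) : M :=
  if j ∈ T then 0 else koszulSign j T • φ (insert j T)

lemma koszulContraction_eq_zero (j : ι) {k : ℕ} {φ : Finset ι → M}
    (h : ∀ T, #T = k + 1 → φ T = 0) {T : Finset ι} (hT : #T = k) :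
    koszulContraction j φ T = 0 := by
  rw [koszulContraction]
  split_ifs with hj
  · rfl
  · rw [h _ (by rw [Finset.card_insert_of_notMem hj, hT]), smul_zero]

/-- Cartan's homotopy formula, twisted by an additive map `g`; the usual one is `g = id`. -/
lemma koszulDiff_koszulContraction_add (x : ι → R) (j : ι) (g : M →+ M)
    (hg : ∀ i ≠ j, ∀ m, g (x i • m) = x i • g m) (φ : Finset ι → M) (T : Finset ι) :
    koszulDiff x (koszulContraction j (g ∘ φ)) T + koszulContraction j (g ∘ koszulDiff x φ) T =
      if j ∈ T then x j • g (φ T) else g (x j • φ T) := by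
  by_cases hj : j ∈ T
  · rw [if_pos hj, koszulContraction, if_pos hj, add_zero, koszulDiff_apply,
      Finset.sum_eq_single_of_mem j hj fun i _ hij ↦ ?_]
    · rw [koszulContraction, if_neg (T.notMem_erase j), Finset.insert_erase hj,
        koszulSign_erase_of_le le_rfl hj, smul_comm (x j), koszulSign_smul_smul_self,
        Function.comp_apply]
    · rw [koszulContraction, if_pos (Finset.mem_erase.2 ⟨hij.symm, hj⟩), smul_zero, smul_zero]
  · have hcancel : ∀ i ∈ T, koszulSign i T • x i • koszulContraction j (g ∘ φ) (T.erase i) =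
        -(koszulSign j T • g (koszulSign i (insert j T) • x i • φ ((insert j T).erase i))) := by
      intro i hi
      have hij : i ≠ j := ne_of_mem_of_not_mem hi hj
      rw [koszulContraction, if_neg (fun h ↦ hj (Finset.mem_of_mem_erase h)), map_zsmul, hg i hij,
        smul_smul (koszulSign j T), koszulSign_mul_koszulSign_insert hi hj,
        Finset.erase_insert_of_ne hij.symm, smul_comm (x i), smul_smul, neg_smul, neg_neg,
        Function.comp_apply]
    rw [if_neg hj, koszulDiff_apply, Finset.sum_congr rfl hcancel, koszulContraction, if_neg hj,
      Function.comp_apply, koszulDiff_apply, Finset.sum_insert hj, map_add, map_sum, smul_add,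
      Finset.sum_neg_distrib, Finset.smul_sum, add_left_comm, neg_add_cancel, add_zero,
      Finset.erase_insert hj, koszulSign_insert_of_le le_rfl, map_zsmul, koszulSign_smul_smul_self]

variable (M) in
/-- Vanishing of the `k`-th Koszul cohomology `H^k(x; M)`. Cocycles and coboundaries are compared
in the relevant degree only, so that cochains need not be homogeneous. -/
def KoszulExactAt (x : ι → R) (k : ℕ) : Prop :=
  ∀ z : Finset ι → M, (∀ T, #T = k + 1 → koszulDiff x z T = 0) →
    ∃ u : Finset ι → M, ∀ T, #T = k → koszulDiff x u T = z T

lemma KoszulExactAt.eq_zero_of_forall_smul_eq_zero {x : ι → R} (h : KoszulExactAt M x 0) {m : M}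
    (hm : ∀ i, x i • m = 0) : m = 0 := by
  obtain ⟨u, hu⟩ := h (fun _ ↦ m) fun T _ ↦
    Finset.sum_eq_zero fun i _ ↦ by rw [hm, smul_zero]
  rw [← hu ∅ Finset.card_empty, koszulDiff_empty]

lemma exists_koszulDiff_eq_smul (x : ι → R) {k : ℕ} {z : Finset ι → M}
    (hz : ∀ T, #T = k + 1 → koszulDiff x z T = 0) {y : R} (hy : y ∈ Ideal.span (Set.range x)) :
    ∃ w : Finset ι → M, ∀ T, #T = k → koszulDiff x w T = y • z T := by
  induction hy using Submodule.span_induction with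
  | mem y hy =>
    obtain ⟨j, rfl⟩ := hy
    refine ⟨koszulContraction j z, fun T hT ↦ ?_⟩
    have cartan := koszulDiff_koszulContraction_add x j (.id M) (fun _ _ _ ↦ rfl) z T
    simpa only [AddMonoidHom.coe_id, Function.id_comp, koszulContraction_eq_zero j hz hT, add_zero,
      id_eq, ite_self] using cartan
  | zero => exact ⟨0, fun T _ ↦ by rw [map_zero, zero_smul, Pi.zero_apply]⟩
  | add a b _ _ ha hb =>
    obtain ⟨w, hw⟩ := ha
    obtain ⟨w', hw'⟩ := hb
    exact ⟨w + w', fun T hT ↦ by rw [map_add, Pi.add_apply, hw T hT, hw' T hT, add_smul]⟩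
  | smul a b _ hb =>
    obtain ⟨w, hw⟩ := hb
    exact ⟨a • w, fun T hT ↦ by rw [map_smul, Pi.smul_apply, hw T hT, smul_assoc]⟩

lemma exists_eq_smul_of_mkQ_eq_zero {y : R} {m : M}
    (h : (y • (⊤ : Submodule R M)).mkQ m = 0) : ∃ v, m = y • v := by
  rw [Submodule.mkQ_apply, Submodule.Quotient.mk_eq_zero,
    Submodule.mem_smul_pointwise_iff_exists] at h
  obtain ⟨v, -, hv⟩ := h
  exact ⟨v, hv.symm⟩

lemma mkQ_smul_eq_zero (y : R) (m : M) : (y • (⊤ : Submodule R M)).mkQ (y • m) = 0 :=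
  (Submodule.Quotient.mk_eq_zero _).2 (Submodule.smul_mem_pointwise_smul m y ⊤ Submodule.mem_top)

lemma KoszulExactAt.of_quotSMulTop {x : ι → R} {y : R} (hy : IsSMulRegular M y)
    (hyx : y ∈ Ideal.span (Set.range x)) {k : ℕ} (h : KoszulExactAt (QuotSMulTop y M) x k) :
    KoszulExactAt M x (k + 1) := by
  intro z hz
  obtain ⟨w, hw⟩ := exists_koszulDiff_eq_smul x hz hyx
  obtain ⟨u, hu⟩ := h (Submodule.mkQ _ ∘ w) fun T hT ↦ by
    rw [koszulDiff_comp_linearMap, Function.comp_apply, hw T hT, mkQ_smul_eq_zero]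
  obtain ⟨u, rfl⟩ := (Submodule.mkQ_surjective _).comp_left u
  have hwu : ∀ T, ∃ v, #T = k → w T - koszulDiff x u T = y • v := by
    intro T
    by_cases hT : #T = k
    · obtain ⟨v, hv⟩ := exists_eq_smul_of_mkQ_eq_zero (y := y) (m := w T - koszulDiff x u T) <| by
        rw [map_sub, sub_eq_zero, ← Function.comp_apply (f := Submodule.mkQ _) (g := w),
          ← hu T hT, koszulDiff_comp_linearMap, Function.comp_apply]
      exact ⟨v, fun _ ↦ hv⟩
    · exact ⟨0, fun h ↦ absurd h hT⟩
  choose v hv using hwu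
  refine ⟨v, fun T hT ↦ hy ?_⟩
  calc y • koszulDiff x v T = koszulDiff x (y • v) T := by rw [map_smul, Pi.smul_apply]
    _ = koszulDiff x (w - koszulDiff x u) T := koszulDiff_congr x (fun S hS ↦ (hv S hS).symm) hT
    _ = y • z T := by rw [map_sub, koszulDiff_koszulDiff, sub_zero, hw T hT]

lemma KoszulExactAt.quotSMulTop {x : ι → R} {y : R} (hy : IsSMulRegular M y) {k : ℕ}
    (h : KoszulExactAt M x k) (h' : KoszulExactAt M x (k + 1)) :
    KoszulExactAt (QuotSMulTop y M) x k := by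
  intro z hz
  obtain ⟨z, rfl⟩ := (Submodule.mkQ_surjective _).comp_left z
  have hdz : ∀ T, ∃ w, #T = k + 1 → koszulDiff x z T = y • w := by
    intro T
    by_cases hT : #T = k + 1
    · have hzT := hz T hT
      rw [koszulDiff_comp_linearMap, Function.comp_apply] at hzT
      obtain ⟨w, hw⟩ := exists_eq_smul_of_mkQ_eq_zero hzT
      exact ⟨w, fun _ ↦ hw⟩
    · exact ⟨0, fun h ↦ absurd h hT⟩
  choose w hw using hdz
  obtain ⟨u, hu⟩ := h' w fun T hT ↦ hy <|
    calc y • koszulDiff x w T = koszulDiff x (y • w) T := by rw [map_smul, Pi.smul_apply]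
      _ = koszulDiff x (koszulDiff x z) T :=
        koszulDiff_congr x (fun S hS ↦ (hw S hS).symm) hT
      _ = y • 0 := by rw [koszulDiff_koszulDiff, Pi.zero_apply, smul_zero]
  obtain ⟨v, hv⟩ := h (z - y • u) fun T hT ↦ by
    rw [map_sub, map_smul, Pi.sub_apply, Pi.smul_apply, hw T hT, hu T hT, sub_self]
  refine ⟨Submodule.mkQ _ ∘ v, fun T hT ↦ ?_⟩
  rw [koszulDiff_comp_linearMap, Function.comp_apply, hv T hT, Pi.sub_apply, Pi.smul_apply,
    map_sub, mkQ_smul_eq_zero, sub_zero]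
  rfl

lemma koszulExactAt_zero_of_isSMulRegular {x : ι → R} {y : R} (hy : IsSMulRegular M y)
    (hyx : y ∈ Ideal.span (Set.range x)) : KoszulExactAt M x 0 := by
  intro z hz
  obtain ⟨w, hw⟩ := exists_koszulDiff_eq_smul x hz hyx
  refine ⟨0, fun T hT ↦ hy ?_⟩
  change y • koszulDiff x 0 T = y • z T
  rw [← hw T hT, Finset.card_eq_zero.1 hT, koszulDiff_empty, koszulDiff_empty, smul_zero]

theorem length_le_of_not_koszulExactAt {x : ι → R} {rs : List R}
    (hrs : ∀ r ∈ rs, r ∈ Ideal.span (Set.range x))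
    (hreg : RingTheory.Sequence.IsWeaklyRegular M rs) {k : ℕ} (hk : ¬ KoszulExactAt M x k) :
    rs.length ≤ k := by
  induction rs generalizing k M with
  | nil => exact Nat.zero_le k
  | cons y rs ih =>
    obtain ⟨hy, hreg⟩ := (RingTheory.Sequence.isWeaklyRegular_cons_iff M y rs).1 hreg
    have hyx := hrs y List.mem_cons_self
    cases k with
    | zero => exact absurd (koszulExactAt_zero_of_isSMulRegular hy hyx) hk
    | succ k =>
      exact Nat.succ_le_succ <| ih (fun r hr ↦ hrs r (List.mem_cons_of_mem y hr)) hreg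
        fun h ↦ hk (h.of_quotSMulTop hy hyx)

lemma exists_isSMulRegular_of_koszulExactAt_zero [IsNoetherianRing R] [Module.Finite R M]
    {x : ι → R} (h : KoszulExactAt M x 0) :
    ∃ y ∈ Ideal.span (Set.range x), IsSMulRegular M y := by
  have hom_eq_zero : ∀ f : (R ⧸ Ideal.span (Set.range x)) →ₗ[R] M, f = 0 := by
    intro f
    refine Submodule.linearMap_qext _ (LinearMap.ext_ring ?_)
    refine h.eq_zero_of_forall_smul_eq_zero fun i ↦ ?_
    rw [← map_smul, LinearMap.comp_apply, Submodule.mkQ_apply,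
      (Submodule.Quotient.mk_eq_zero _).2, map_zero]
    exact Ideal.mul_mem_right _ _ (Ideal.subset_span (Set.mem_range_self i))
  have := IsSMulRegular.subsingleton_linearMap_iff.1 (subsingleton_of_forall_eq 0 hom_eq_zero)
  rwa [Ideal.annihilator_quotient] at this

theorem exists_isWeaklyRegular_of_forall_koszulExactAt [IsNoetherianRing R] [Module.Finite R M]
    {x : ι → R} {k : ℕ} (h : ∀ j < k, KoszulExactAt M x j) :
    ∃ rs : List R, rs.length = k ∧ (∀ r ∈ rs, r ∈ Ideal.span (Set.range x)) ∧
      RingTheory.Sequence.IsWeaklyRegular M rs := by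
  induction k generalizing M with
  | zero => exact ⟨[], rfl, by simp, .nil R M⟩
  | succ k ih =>
    obtain ⟨y, hyx, hy⟩ := exists_isSMulRegular_of_koszulExactAt_zero (h 0 k.succ_pos)
    obtain ⟨rs, hlen, hrs, hreg⟩ := ih (M := QuotSMulTop y M) fun j hj ↦
      (h j (by omega)).quotSMulTop hy (h (j + 1) (by omega))
    exact ⟨y :: rs, by rw [List.length_cons, hlen], List.forall_mem_cons.2 ⟨hyx, hrs⟩,
      .cons hy hreg⟩

theorem moduleDepth_span_range_eq {R M : Type} [CommRing R] [IsNoetherianRing R]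
    [AddCommGroup M] [Module R M] [Module.Finite R M] {x : ι → R} {k : ℕ}
    (hne : Ideal.span (Set.range x) • (⊤ : Submodule R M) ≠ ⊤)
    (hlt : ∀ j < k, KoszulExactAt M x j) (hk : ¬ KoszulExactAt M x k) :
    moduleDepth (Ideal.span (Set.range x)) M = k := by
  apply le_antisymm
  · refine sSup_le ?_
    rintro _ ⟨rs, rfl, hrs, hreg⟩
    exact_mod_cast length_le_of_not_koszulExactAt hrs hreg.toIsWeaklyRegular hk
  · obtain ⟨rs, rfl, hrs, hreg⟩ := exists_isWeaklyRegular_of_forall_koszulExactAt hlt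
    refine le_sSup ⟨rs, rfl, hrs, hreg, fun htop ↦ hne (top_le_iff.1 ?_)⟩
    exact htop.le.trans (Submodule.smul_mono_left (Ideal.span_le.2 hrs))

/-- Subtracting from a cocycle `z` the coboundary of its `i`-th contraction, twisted by `D i`, makes
all `D i (x i • z T)` with `i ∉ T` vanish. As the projections `D i ∘ x i` commute, this can be done
for one `i` after the other, and `hzero` applies to what is left. -/
theorem koszulExactAt_of_forall_eq_zero [Finite ι] {x : ι → R} {D : ι → M →+ M} {k : ℕ}
    (hDx : ∀ i l, i ≠ l → ∀ m, D i (x l • m) = x l • D i m)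
    (hDD : ∀ i l m, D i (D l m) = D l (D i m))
    (hproj : ∀ i m, D i (x i • D i (x i • m)) = D i (x i • m))
    (hzero : ∀ T : Finset ι, #T = k → ∀ m, (∀ i ∉ T, D i (x i • m) = 0) → m = 0) :
    KoszulExactAt M x k := by
  have := Fintype.ofFinite ι
  suffices key : ∀ B : Finset ι, ∀ z : Finset ι → M, (∀ T, #T = k + 1 → koszulDiff x z T = 0) →
      (∀ T, #T = k → ∀ i ∉ B, i ∉ T → D i (x i • z T) = 0) →
      ∃ u : Finset ι → M, ∀ T, #T = k → koszulDiff x u T = z T from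
    fun z hz ↦ key Finset.univ z hz fun T _ i hi ↦ absurd (Finset.mem_univ i) hi
  intro B
  induction B using Finset.induction_on with
  | empty =>
    intro z _ hB
    refine ⟨0, fun T hT ↦ ?_⟩
    rw [hzero T hT (z T) fun i hi ↦ hB T hT i (Finset.notMem_empty i) hi, map_zero, Pi.zero_apply]
  | insert l B hl ih =>
    intro z hz hB
    set h := koszulContraction l (D l ∘ z)
    have hdh : ∀ T, #T = k →
        koszulDiff x h T = if l ∈ T then x l • D l (z T) else D l (x l • z T) := by
      intro T hT
      rw [← koszulDiff_koszulContraction_add x l (D l) (fun i hi ↦ hDx l i hi.symm),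
        koszulContraction_eq_zero l (φ := D l ∘ koszulDiff x z) _ hT, add_zero]
      intro S hS
      rw [Function.comp_apply, hz S hS, map_zero]
    obtain ⟨u, hu⟩ := ih (z - koszulDiff x h)
      (fun T hT ↦ by rw [map_sub, koszulDiff_koszulDiff, sub_zero, hz T hT]) (by
        intro T hT i hiB hiT
        rw [Pi.sub_apply, hdh T hT, smul_sub, map_sub]
        rcases eq_or_ne i l with rfl | hil
        · rw [if_neg hiT, hproj, sub_self]
        · have hi : D i (x i • z T) = 0 := hB T hT i (by simp [hil, hiB]) hiT
          split_ifs
          · rw [smul_comm, ← hDx l i hil.symm, hDx i l hil, hDD, hi, map_zero, smul_zero, sub_self]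
          · rw [← hDx l i hil.symm, smul_comm, hDD, hDx i l hil, hi, smul_zero, map_zero, sub_self])
    exact ⟨u + h, fun T hT ↦ by rw [map_add, Pi.add_apply, hu T hT, Pi.sub_apply, sub_add_cancel]⟩

end KoszulComplex

lemma exists_ne_zero_forall_mem_eq_zero_of_ncard_lt {α β K : Type*} [Finite β] [Field K]
    (L : (α → K) →ₗ[K] (β → K)) {A : Set α} {B : Set β} (h : B.ncard < A.ncard) :
    ∃ c ≠ 0, (∀ a ∉ A, c a = 0) ∧ ∀ b ∈ B, L c b = 0 := by
  have := (Set.finite_of_ncard_pos (Nat.zero_le _ |>.trans_lt h)).fintype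
  have := (Set.toFinite B).fintype
  let extend : (A → K) →ₗ[K] (α → K) := Function.ExtendByZero.linearMap K Subtype.val
  let restrict : (β → K) →ₗ[K] (B → K) := LinearMap.funLeft K K Subtype.val
  have hlt : Module.finrank K (B → K) < Module.finrank K (A → K) := by
    rwa [Module.finrank_fintype_fun_eq_card, Module.finrank_fintype_fun_eq_card,
      ← Nat.card_eq_fintype_card, ← Nat.card_eq_fintype_card]
  obtain ⟨c, hc, hc0⟩ := Submodule.exists_mem_ne_zero_of_ne_bot
    (LinearMap.ker_ne_bot_of_finrank_lt (f := restrict ∘ₗ L ∘ₗ extend) hlt)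
  refine ⟨extend c, fun h0 ↦ hc0 ?_, fun a ha ↦ ?_, fun b hb ↦ congrFun hc ⟨b, hb⟩⟩
  · funext a
    rw [← Subtype.val_injective.extend_apply c 0 a]
    exact congrFun h0 a
  · exact Function.extend_apply' _ _ _ fun ⟨a', ha'⟩ ↦ ha (ha' ▸ a'.2)

section LowerVar

variable {σ R : Type*} [CommSemiring R]

/-- The additive endomorphism dividing a monomial by `X i` if `X i ^ 2` divides it, and sending it
to `0` otherwise. Thus the monomials that survive keep their supports. -/
noncomputable def lowerVar (i : σ) : MvPolynomial σ R →+ MvPolynomial σ R where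
  toFun p := X i * p.divMonomial (Finsupp.single i 2)
  map_zero' := by rw [zero_divMonomial, mul_zero]
  map_add' p q := by rw [add_divMonomial, mul_add]

lemma coeff_lowerVar (i : σ) (p : MvPolynomial σ R) (m : σ →₀ ℕ) :
    coeff m (lowerVar i p) = if m i = 0 then 0 else coeff (m + Finsupp.single i 1) p := by
  classical
  change coeff m (X i * p.divMonomial (Finsupp.single i 2)) = _
  rw [coeff_X_mul']
  simp only [Finsupp.mem_support_iff, ite_not, coeff_divMonomial]
  refine if_ctx_congr Iff.rfl (fun _ ↦ rfl) fun hi ↦ congrArg (coeff · p) ?_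
  have hle : Finsupp.single i 1 ≤ m := Finsupp.single_le_iff.2 (Nat.one_le_iff_ne_zero.2 hi)
  rw [show (2 : ℕ) = 1 + 1 from rfl, Finsupp.single_add, add_assoc, add_tsub_cancel_of_le hle,
    add_comm]

lemma lowerVar_X_mul_of_ne {i l : σ} (h : i ≠ l) (p : MvPolynomial σ R) :
    lowerVar i (X l * p) = X l * lowerVar i p := by
  classical
  ext m
  have hcomm : m - Finsupp.single l 1 + Finsupp.single i 1 =
      m + Finsupp.single i 1 - Finsupp.single l 1 := by
    ext j
    rcases eq_or_ne l j with rfl | hj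
    · simp [h]
    · simp [hj]
  rw [coeff_lowerVar, coeff_X_mul', coeff_X_mul', coeff_lowerVar, hcomm]
  simp only [Finsupp.mem_support_iff, Finsupp.add_apply, Finsupp.tsub_apply, ite_not,
    Finsupp.single_eq_of_ne h, Finsupp.single_eq_of_ne h.symm, tsub_zero, add_zero]
  split_ifs <;> rfl

lemma lowerVar_comm (i l : σ) (p : MvPolynomial σ R) :
    lowerVar i (lowerVar l p) = lowerVar l (lowerVar i p) := by
  rcases eq_or_ne i l with rfl | h
  · rfl
  ext m
  simp only [coeff_lowerVar, Finsupp.add_apply, Finsupp.single_eq_of_ne h,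
    Finsupp.single_eq_of_ne h.symm, add_zero, add_right_comm m]
  split_ifs <;> rfl

lemma coeff_lowerVar_X_mul (i : σ) (p : MvPolynomial σ R) (m : σ →₀ ℕ) :
    coeff m (lowerVar i (X i * p)) = if m i = 0 then 0 else coeff m p := by
  rw [coeff_lowerVar, add_comm m, coeff_X_mul]

lemma lowerVar_X_mul_lowerVar_X_mul (i : σ) (p : MvPolynomial σ R) :
    lowerVar i (X i * lowerVar i (X i * p)) = lowerVar i (X i * p) := by
  ext m
  rw [coeff_lowerVar_X_mul, coeff_lowerVar_X_mul]
  split_ifs <;> rfl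

lemma exists_support_eq_of_mem_support_lowerVar {i : σ} {p : MvPolynomial σ R} {m : σ →₀ ℕ}
    (hm : m ∈ (lowerVar i p).support) : ∃ m' ∈ p.support, m'.support = m.support := by
  classical
  rw [mem_support_iff, coeff_lowerVar] at hm
  have hi : i ∈ m.support := Finsupp.mem_support_iff.2 fun h ↦ hm (if_pos h)
  refine ⟨m + Finsupp.single i 1, mem_support_iff.2 fun h ↦ hm (by rw [h, ite_self]), ?_⟩
  rw [Finsupp.support_add_eq_union, Finsupp.support_single i one_ne_zero,
    Finset.union_eq_left.2 (Finset.singleton_subset_iff.2 hi)]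

end LowerVar

section Exponent

open scoped Finset

variable {σ : Type*}

/-- The exponent vector of the square-free monomial `∏ i ∈ T, X i`. -/
noncomputable def sqExponent (T : Finset σ) : σ →₀ ℕ :=
  ∑ i ∈ T, Finsupp.single i 1

lemma sqExponent_apply [DecidableEq σ] (T : Finset σ) (j : σ) :
    sqExponent T j = if j ∈ T then 1 else 0 := by
  simp [sqExponent, Finsupp.finsetSum_apply, Finsupp.single_apply]

lemma support_sqExponent (T : Finset σ) : (sqExponent T).support = T := by
  classical
  ext j
  simp [sqExponent_apply]

lemma sqExponent_le_iff {T : Finset σ} {m : σ →₀ ℕ} :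
    sqExponent T ≤ m ↔ T ⊆ m.support := by
  classical
  simp only [Finsupp.le_def, sqExponent_apply, Finset.subset_iff, Finsupp.mem_support_iff,
    ← Nat.one_le_iff_ne_zero]
  refine forall_congr' fun i ↦ ?_
  split_ifs with hi <;> simp [hi]

lemma degree_sqExponent (T : Finset σ) : (sqExponent T).degree = #T := by
  simp [sqExponent]

lemma card_support_le_degree (m : σ →₀ ℕ) : #m.support ≤ m.degree := by
  rw [Finset.card_eq_sum_ones, Finsupp.degree_apply]
  exact Finset.sum_le_sum fun i hi ↦ Nat.one_le_iff_ne_zero.2 (Finsupp.mem_support_iff.1 hi)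

end Exponent

lemma mem_pow_succ_of_mkQ_mem_smul_top {R : Type} [CommRing R] {𝔞 I J : Ideal R} {d : ℕ}
    (hI : I ≤ 𝔞 ^ d) (hJ : J ≤ 𝔞 ^ (d + 1)) {p : I}
    (hp : (Submodule.comap I.subtype J).mkQ p ∈ 𝔞 • (⊤ : Submodule R (idealQuot I J))) :
    (p : R) ∈ 𝔞 ^ (d + 1) := by
  rw [← Submodule.mem_comap,
    Submodule.comap_smul_top_of_surjective _ _ (Submodule.mkQ_surjective _),
    Submodule.ker_mkQ] at hp
  obtain ⟨q, hq, j, hj, rfl⟩ := Submodule.mem_sup.1 hp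
  refine add_mem ?_ (hJ hj)
  rw [pow_succ']
  exact Ideal.mul_mono_right hI ((Submodule.mem_smul_top_iff _ _ _).1 hq)

section SquarefreeMonomialIdeal

open scoped Finset

variable {K : Type} [Field K] {n : ℕ}

lemma sqMon_eq_monomial (T : Finset (Fin n)) : sqMon K T = monomial (sqExponent T) 1 := by
  rw [sqMon, sqExponent, monomial_sum_one]
  rfl

lemma mem_span_sqMon_iff {G : Set (Finset (Fin n))} {p : MvPolynomial (Fin n) K} :
    p ∈ Ideal.span (sqMon K '' G) ↔ ∀ m ∈ p.support, ∃ T ∈ G, T ⊆ m.support := by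
  have himage : sqMon K '' G = (monomial · 1) '' (sqExponent '' G) := by
    rw [Set.image_image]
    exact Set.image_congr fun T _ ↦ sqMon_eq_monomial T
  simp only [himage, mem_ideal_span_monomial_image, Set.exists_mem_image, sqExponent_le_iff]

lemma sqMon_mem_span_sqMon_iff {G : Set (Finset (Fin n))} {T : Finset (Fin n)} :
    sqMon K T ∈ Ideal.span (sqMon K '' G) ↔ ∃ F ∈ G, F ⊆ T := by
  classical
  rw [mem_span_sqMon_iff, sqMon_eq_monomial, support_monomial, if_neg one_ne_zero]
  simp only [Finset.mem_singleton, forall_eq, support_sqExponent]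

variable {I J : Ideal (MvPolynomial (Fin n) K)} {P Q : ℕ → Prop}

lemma GenBySqMonOfDeg.mem_iff (hI : GenBySqMonOfDeg K P I) {p : MvPolynomial (Fin n) K} :
    p ∈ I ↔ ∀ m ∈ p.support, sqMon K m.support ∈ I := by
  obtain ⟨G, -, rfl⟩ := hI
  simp only [mem_span_sqMon_iff (p := p), sqMon_mem_span_sqMon_iff]

lemma GenBySqMonOfDeg.le_card {d : ℕ} (hI : GenBySqMonOfDeg K (d ≤ ·) I) {T : Finset (Fin n)}
    (hT : sqMon K T ∈ I) : d ≤ #T := by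
  obtain ⟨G, hG, rfl⟩ := hI
  obtain ⟨F, hF, hFT⟩ := sqMon_mem_span_sqMon_iff.1 hT
  exact (hG F hF).trans (Finset.card_le_card hFT)

lemma GenBySqMonOfDeg.lowerVar_mem (hI : GenBySqMonOfDeg K P I) (i : Fin n)
    {p : MvPolynomial (Fin n) K} (hp : p ∈ I) : lowerVar i p ∈ I := by
  rw [hI.mem_iff] at hp ⊢
  intro m hm
  obtain ⟨m', hm', hsupp⟩ := exists_support_eq_of_mem_support_lowerVar hm
  exact hsupp ▸ hp m' hm'

lemma GenBySqMonOfDeg.mono (hI : GenBySqMonOfDeg K P I) (h : ∀ k, P k → Q k) :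
    GenBySqMonOfDeg K Q I :=
  let ⟨G, hG, hIG⟩ := hI
  ⟨G, fun T hT ↦ h _ (hG T hT), hIG⟩

lemma genBySqMonOfDeg_span_range {ι : Type*} {f : ι → Finset (Fin n)} (hf : ∀ i, P #(f i)) :
    GenBySqMonOfDeg K P (Ideal.span (Set.range fun i ↦ sqMon K (f i))) :=
  ⟨Set.range f, Set.forall_mem_range.2 hf, congrArg Ideal.span (Set.range_comp (sqMon K) f)⟩

lemma le_rho_span_range {d r : ℕ} {f : Fin r → Finset (Fin n)} (hf : Function.Injective f)
    (hfd : ∀ i, #(f i) = d) :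
    r ≤ rho K d (Ideal.span (Set.range fun i ↦ sqMon K (f i))) := by
  calc r = (Set.range f).ncard := by
        rw [← Set.image_univ, Set.ncard_image_of_injective _ hf, Set.ncard_univ, Nat.card_fin]
    _ ≤ rho K d _ := Set.ncard_le_ncard (Set.range_subset_iff.2 fun i ↦
        ⟨hfd i, Ideal.subset_span (Set.mem_range_self i)⟩) (Set.toFinite _)

lemma GenBySqMonOfDeg.le_maxGraded_pow {d : ℕ} (hI : GenBySqMonOfDeg K (d ≤ ·) I) :
    I ≤ maxGraded K n ^ d := by
  intro p hp
  refine (mem_pow_idealOfVars_iff d p).2 fun m hm ↦ ?_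
  exact (hI.le_card (hI.mem_iff.1 hp m hm)).trans (card_support_le_degree m)

/-- The additive endomorphism of `I/J` induced by `lowerVar i`. -/
noncomputable def idealQuotLowerVar (hI : GenBySqMonOfDeg K P I) (hJ : GenBySqMonOfDeg K Q J)
    (i : Fin n) : idealQuot I J →+ idealQuot I J :=
  QuotientAddGroup.map (Submodule.comap I.subtype J).toAddSubgroup
    (Submodule.comap I.subtype J).toAddSubgroup
    (((lowerVar i).comp I.subtype.toAddMonoidHom).codRestrict I.toAddSubgroup
      fun p ↦ hI.lowerVar_mem i p.2)
    fun _ hp ↦ hJ.lowerVar_mem i hp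

lemma idealQuotLowerVar_mkQ (hI : GenBySqMonOfDeg K P I) (hJ : GenBySqMonOfDeg K Q J)
    (i : Fin n) (p : I) : idealQuotLowerVar hI hJ i (Submodule.mkQ _ p) =
      Submodule.mkQ _ ⟨lowerVar i p, hI.lowerVar_mem i p.2⟩ := rfl

lemma koszulExactAt_idealQuot {d : ℕ} (hI : GenBySqMonOfDeg K (d ≤ ·) I)
    (hJ : GenBySqMonOfDeg K Q J) {k : ℕ} (hk : k < d) :
    KoszulExactAt (idealQuot I J) (X : Fin n → MvPolynomial (Fin n) K) k := by
  have hsurj := Submodule.mkQ_surjective (Submodule.comap I.subtype J)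
  refine koszulExactAt_of_forall_eq_zero (D := idealQuotLowerVar hI hJ)
    (fun i l hil ↦ hsurj.forall.2 fun p ↦ ?_) (fun i l ↦ hsurj.forall.2 fun p ↦ ?_)
    (fun i ↦ hsurj.forall.2 fun p ↦ ?_) (fun T hT ↦ hsurj.forall.2 fun p hp ↦ ?_)
  · rw [← map_smul, idealQuotLowerVar_mkQ, idealQuotLowerVar_mkQ, ← map_smul]
    exact congrArg (Submodule.mkQ _) (Subtype.ext (lowerVar_X_mul_of_ne hil p.1))
  · simp only [idealQuotLowerVar_mkQ, lowerVar_comm]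
  · simp only [← map_smul, idealQuotLowerVar_mkQ]
    exact congrArg (Submodule.mkQ _) (Subtype.ext (lowerVar_X_mul_lowerVar_X_mul i p.1))
  · refine (Submodule.Quotient.mk_eq_zero _).2 (hJ.mem_iff.2 fun m hm ↦ ?_)
    have hlt : #T < #m.support := hT ▸ hk.trans_le (hI.le_card (hI.mem_iff.1 p.2 m hm))
    obtain ⟨i, him, hiT⟩ := Finset.exists_mem_notMem_of_card_lt_card hlt
    have hmem : lowerVar i (X i * (p : MvPolynomial (Fin n) K)) ∈ J :=
      (Submodule.Quotient.mk_eq_zero (Submodule.comap I.subtype J)).1 (hp i hiT)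
    refine hJ.mem_iff.1 hmem m ?_
    rw [mem_support_iff, coeff_lowerVar_X_mul, if_neg (Finsupp.mem_support_iff.1 him)]
    exact mem_support_iff.1 hm

lemma mkQ_notMem_maxGraded_smul_top {d : ℕ} (hI : GenBySqMonOfDeg K (d ≤ ·) I)
    (hJ : GenBySqMonOfDeg K (d < ·) J) {a : K} (ha : a ≠ 0) {T : Finset (Fin n)} (hT : #T = d)
    {p : I} (hp : (p : MvPolynomial (Fin n) K) = C a * sqMon K T) :
    (Submodule.comap I.subtype J).mkQ p ∉
      maxGraded K n • (⊤ : Submodule (MvPolynomial (Fin n) K) (idealQuot I J)) := by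
  intro h
  have hmem := mem_pow_succ_of_mkQ_mem_smul_top hI.le_maxGraded_pow hJ.le_maxGraded_pow h
  rw [hp, sqMon_eq_monomial, C_mul_monomial, mul_one] at hmem
  have hle := (monomial_mem_pow_idealOfVars_iff (d + 1) _ ha).1 hmem
  rw [degree_sqExponent, hT] at hle
  omega

lemma koszulDiff_X_C_mul_sqMon (c : Finset (Fin n) → K) (T : Finset (Fin n)) :
    koszulDiff (X : Fin n → MvPolynomial (Fin n) K) (fun S ↦ C (c S) * sqMon K S) T =
      C (koszulDiff (1 : Fin n → K) c T) * sqMon K T := by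
  rw [koszulDiff_apply, koszulDiff_apply, map_sum, Finset.sum_mul]
  refine Finset.sum_congr rfl fun i hi ↦ ?_
  rw [map_zsmul, smul_mul_assoc, Pi.one_apply, one_smul, smul_eq_mul, mul_left_comm, sqMon, sqMon,
    Finset.mul_prod_erase T X hi]

lemma not_koszulExactAt_idealQuot {d : ℕ} (hI : GenBySqMonOfDeg K (d ≤ ·) I)
    (hJ : GenBySqMonOfDeg K (d < ·) J) {c : Finset (Fin n) → K} (hc : c ≠ 0)
    (hcI : ∀ T, c T ≠ 0 → #T = d ∧ sqMon K T ∈ I)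
    (hcJ : ∀ T, #T = d + 1 → sqMon K T ∉ J → koszulDiff (1 : Fin n → K) c T = 0) :
    ¬ KoszulExactAt (idealQuot I J) (X : Fin n → MvPolynomial (Fin n) K) d := by
  intro hexact
  have hmemI (T : Finset (Fin n)) : C (c T) * sqMon K T ∈ I := by
    by_cases hT : c T = 0
    · rw [hT, map_zero, zero_mul]
      exact I.zero_mem
    · exact I.mul_mem_left _ (hcI T hT).2
  let z (T : Finset (Fin n)) : I := ⟨C (c T) * sqMon K T, hmemI T⟩
  obtain ⟨u, hu⟩ := hexact (Submodule.mkQ _ ∘ z) fun T hT ↦ by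
    rw [koszulDiff_comp_linearMap, Function.comp_apply, Submodule.mkQ_apply,
      Submodule.Quotient.mk_eq_zero, Submodule.mem_comap, Submodule.subtype_apply, coe_koszulDiff,
      koszulDiff_X_C_mul_sqMon]
    by_cases hTJ : sqMon K T ∈ J
    · exact J.mul_mem_left _ hTJ
    · rw [hcJ T hT hTJ, map_zero, zero_mul]
      exact J.zero_mem
  obtain ⟨T, hT⟩ := Function.ne_iff.1 hc
  refine mkQ_notMem_maxGraded_smul_top hI hJ hT (hcI T hT).1 (p := z T) rfl ?_
  rw [← Function.comp_apply (f := Submodule.mkQ _), ← hu T (hcI T hT).1]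
  exact koszulDiff_mem_span_smul_top X u T

lemma exists_koszulDiff_one_eq_zero {d : ℕ}
    (h : Set.ncard {T : Finset (Fin n) | #T = d + 1 ∧ sqMon K T ∈ I ∧ sqMon K T ∉ J} <
      rho K d I) :
    ∃ c : Finset (Fin n) → K, c ≠ 0 ∧ (∀ T, c T ≠ 0 → #T = d ∧ sqMon K T ∈ I) ∧
      ∀ T, #T = d + 1 → sqMon K T ∉ J → koszulDiff (1 : Fin n → K) c T = 0 := by
  obtain ⟨c, hc, hcI, hcJ⟩ :=
    exists_ne_zero_forall_mem_eq_zero_of_ncard_lt (koszulDiff (1 : Fin n → K)) h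
  have hcI' (T : Finset (Fin n)) (hT : c T ≠ 0) : #T = d ∧ sqMon K T ∈ I :=
    not_not.1 (mt (hcI T) hT)
  refine ⟨c, hc, hcI', fun T hT hTJ ↦ ?_⟩
  by_cases hTI : sqMon K T ∈ I
  · exact hcJ T ⟨hT, hTI, hTJ⟩
  · refine Finset.sum_eq_zero fun i hi ↦ ?_
    have hci : c (T.erase i) = 0 := by
      by_contra hne
      apply hTI
      rw [sqMon, ← Finset.mul_prod_erase T X hi]
      exact I.mul_mem_left _ (hcI' _ hne).2
    rw [hci, smul_zero, smul_zero]

end SquarefreeMonomialIdeal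

theorem stmt_8_general {n : ℕ} {K : Type} [Field K] {d : ℕ} {I J : Ideal (MvPolynomial (Fin n) K)}
    (hI : GenBySqMonOfDeg K (d ≤ ·) I) (hJ : GenBySqMonOfDeg K (d < ·) J)
    (h : Set.ncard {T : Finset (Fin n) | T.card = d + 1 ∧ sqMon K T ∈ I ∧ sqMon K T ∉ J} <
      rho K d I) :
    moduleDepth (maxGraded K n) (idealQuot I J) = d := by
  obtain ⟨c, hc, hcI, hcJ⟩ := exists_koszulDiff_one_eq_zero h
  obtain ⟨T, hT⟩ := Function.ne_iff.1 hc
  have hne : maxGraded K n • (⊤ : Submodule _ (idealQuot I J)) ≠ ⊤ := fun htop ↦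
    mkQ_notMem_maxGraded_smul_top hI hJ hT (hcI T hT).1
      (p := ⟨C (c T) * sqMon K T, I.mul_mem_left _ (hcI T hT).2⟩) rfl (htop.ge Submodule.mem_top)
  exact moduleDepth_span_range_eq hne (fun j hj ↦ koszulExactAt_idealQuot hI hJ hj)
    (not_koszulExactAt_idealQuot hI hJ hc hcI hcJ)

/-- Proposition 1.12. -/
theorem stmt_8 (n : ℕ) (K : Type) [Field K] (d : ℕ) (hd : 0 < d)
    (I J : Ideal (MvPolynomial (Fin n) K)) (hJ0 : J ≠ ⊥) (hJI : J < I)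
    (r : ℕ) (hr : 0 < r) (f : Fin r → Finset (Fin n)) (hfinj : Function.Injective f)
    (hfd : ∀ i, (f i).card = d)
    (hIgen : I = Ideal.span (Set.range fun i => sqMon K (f i)))
    (hJgen : GenBySqMonOfDeg K (fun k => k = d + 1) J)
    (s : ℕ)
    (hs : s = Set.ncard {T : Finset (Fin n) |
      T.card = d + 1 ∧ sqMon K T ∈ I ∧ sqMon K T ∉ J})
    (hrs : s < r) (hs2 : s = 2) :
    moduleDepth (maxGraded K n) (idealQuot I J) = (d : ℕ∞) := by
  subst hIgen hs
  exact stmt_8_general (genBySqMonOfDeg_span_range fun i ↦ (hfd i).ge)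
    (hJgen.mono fun _ hk ↦ hk ▸ d.lt_succ_self) (hrs.trans_le (le_rho_span_range hfinj hfd))
end

section
/- Suppose d = 1 and r > s, where s is the number of square-free monomials of degree 2 lying in I \ J. Then depth_S (I/J) = 1. -/
open MvPolynomial

/-!
Join two variables `x_b`, `x_v` by an edge when `x_b x_v ∈ I \ J`. There are fewer edges than
variables in `I`, so some nonempty set `B` of variables of `I` has no edge leaving it: if `𝔟` is
generated by the variables in `B` and `𝔠` by the others, then `𝔟 𝔠 ⊆ J`. Let `y = y_𝔟 + y_𝔠` and
`z = z_𝔟 + z_𝔠` in `𝔪 = 𝔟 + 𝔠`. Modulo `J` we have `z y_𝔟 = y z_𝔟`, so if `y, z` were a regular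
sequence on `I/J`, then `y_𝔟 = y w` for some `w ∈ I`; hence `y x = y_𝔟 x = y w x`, and so `x = w x`,
for every `x ∈ 𝔟`. This puts the variables in `B` into `J + I𝔟 ⊆ 𝔪²`, which is absurd: the depth is
at most `1`.

For the other bound, `J` is the intersection of the primes generated by the variables outside `C`,
where `C` runs over the sets of variables containing the support of no generator of `J`. The sum of
all the variables lies in none of these primes except, for `C = ∅`, in `𝔪`, which contains `I`; so
it is a nonzerodivisor on `I/J`.
-/

section Depth

open RingTheory.Sequence
open scoped Pointwise

variable {R : Type} [CommRing R] {I J : Ideal R}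

lemma moduleDepth_le_one {M : Type} [AddCommGroup M] [Module R M]
    (h : ∀ y ∈ I, ∀ z ∈ I, ¬ IsWeaklyRegular M [y, z]) :
    moduleDepth I M ≤ 1 := by
  refine sSup_le ?_
  rintro _ ⟨rs, rfl, hmem, hreg⟩
  match rs with
  | [] => simp
  | [_] => simp
  | y :: z :: l =>
    have hyz := ((isWeaklyRegular_append_iff M [y, z] l).mp hreg.toIsWeaklyRegular).1
    exact absurd hyz (h y (hmem y (by simp)) z (hmem z (by simp)))

lemma one_le_moduleDepth {M : Type} [AddCommGroup M] [Module R M] {y : R} (hy : y ∈ I)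
    (hreg : IsRegular M [y]) : 1 ≤ moduleDepth I M :=
  le_sSup ⟨[y], by simp, by simpa using hy, hreg⟩

lemma isSMulRegular_idealQuot_iff {y : R} :
    IsSMulRegular (idealQuot I J) y ↔ ∀ p ∈ I, y * p ∈ J → p ∈ J :=
  (isSMulRegular_quotient_iff_mem_of_smul_mem _ y).trans Subtype.forall

lemma mk_mem_smul_top_idealQuot_iff {y : R} {p : I} :
    (Submodule.Quotient.mk p : idealQuot I J) ∈ y • (⊤ : Submodule R (idealQuot I J)) ↔
      ∃ w ∈ I, y * w - p ∈ J := by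
  rw [Submodule.mem_smul_pointwise_iff_exists]
  simp only [Submodule.mem_top, true_and, (Submodule.Quotient.mk_surjective _).exists,
    ← Submodule.Quotient.mk_smul, Submodule.Quotient.eq, Subtype.exists, SetLike.mk_smul_mk,
    Submodule.mem_comap, map_sub, Submodule.subtype_apply, smul_eq_mul, exists_prop]

lemma isRegular_singleton_idealQuot {y : R} (hreg : ∀ p ∈ I, y * p ∈ J → p ∈ J)
    (hne : ¬ I ≤ J ⊔ Ideal.span {y} * I) :
    IsRegular (idealQuot I J) [y] := by
  refine ⟨(isWeaklyRegular_singleton_iff _ y).mpr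
    (isSMulRegular_idealQuot_iff.mpr hreg), fun htop ↦ hne fun p hp ↦ ?_⟩
  rw [Ideal.ofList_singleton, Submodule.ideal_span_singleton_smul] at htop
  obtain ⟨w, hw, hwp⟩ := mk_mem_smul_top_idealQuot_iff.mp
    (htop ▸ Submodule.mem_top : (Submodule.Quotient.mk ⟨p, hp⟩ : idealQuot I J) ∈ _)
  rw [← sub_sub_cancel (y * w) p, sub_eq_neg_add]
  exact Submodule.add_mem_sup (neg_mem hwp)
    (Ideal.mul_mem_mul (Ideal.mem_span_singleton_self y) hw)

lemma le_sup_mul_of_isWeaklyRegular_pair {𝔟 𝔠 : Ideal R} (hbI : 𝔟 ≤ I) (hbc : 𝔟 * 𝔠 ≤ J)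
    {y z : R} (hy : y ∈ 𝔟 ⊔ 𝔠) (hz : z ∈ 𝔟 ⊔ 𝔠)
    (hreg : IsWeaklyRegular (idealQuot I J) [y, z]) : 𝔟 ≤ J ⊔ I * 𝔟 := by
  simp only [isWeaklyRegular_cons_iff] at hreg
  obtain ⟨yb, hyb, yc, hyc, rfl⟩ := Submodule.mem_sup.mp hy
  obtain ⟨zb, hzb, zc, hzc, rfl⟩ := Submodule.mem_sup.mp hz
  have hswap : (yb + yc) * zb - (zb + zc) * yb ∈ J := by
    have := sub_mem (hbc (Ideal.mul_mem_mul hzb hyc)) (hbc (Ideal.mul_mem_mul hyb hzc))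
    convert this using 1
    ring
  obtain ⟨w, hw, hyw⟩ : ∃ w ∈ I, (yb + yc) * w - yb ∈ J :=
    mk_mem_smul_top_idealQuot_iff.mp <| mem_of_isSMulRegular_quotient_of_smul_mem hreg.2.1
      (mk_mem_smul_top_idealQuot_iff (p := (zb + zc) • ⟨yb, hbI hyb⟩).mpr ⟨zb, hbI hzb, hswap⟩)
  intro x hx
  have hyx : (yb + yc) * (x - w * x) ∈ J := by
    have := sub_mem (hbc (Ideal.mul_mem_mul hx hyc)) (J.mul_mem_left x hyw)
    convert this using 1
    ring
  have hxw : x - w * x ∈ J := isSMulRegular_idealQuot_iff.mp hreg.1 _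
    (sub_mem (hbI hx) (I.mul_mem_right x hw)) hyx
  rw [← sub_add_cancel x (w * x)]
  exact Submodule.add_mem_sup hxw (Ideal.mul_mem_mul hw hx)

end Depth

section Graph

open Finset

lemma exists_nonempty_subset_forall_pair_notMem {V : Type*} [DecidableEq V] {A : Finset V}
    {E : Finset (Finset V)} (h : #E < #A) :
    ∃ B ⊆ A, B.Nonempty ∧ ∀ b ∈ B, ∀ v ∉ B, {b, v} ∉ E := by
  induction A using Finset.strongInduction generalizing E with
  | H A ih =>
    by_cases hA : ∀ a ∈ A, ∀ v ∉ A, {a, v} ∉ E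
    · exact ⟨A, subset_rfl, card_pos.mp (by lia), hA⟩
    push Not at hA
    obtain ⟨a, ha, v, hv, hav⟩ := hA
    -- Deleting `a` from `A` and `{a, v}` from `E` is harmless: both ends of the edge `{a, v}` lie
    -- outside `A \ {a}`, so it leaves no subset of it.
    have hcard : #(E.erase {a, v}) < #(A.erase a) := by
      have := card_erase_add_one ha
      have := card_erase_add_one hav
      lia
    obtain ⟨B, hBA, hB, hBE⟩ := ih (A.erase a) (erase_ssubset ha) hcard
    refine ⟨B, hBA.trans (erase_subset a A), hB, fun b hb w hw hbw ↦ ?_⟩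
    refine hBE b hb w hw (mem_erase.mpr ⟨fun heq ↦ ?_, hbw⟩)
    have hbA : b ∈ A.erase a := hBA hb
    have hbav : b ∈ ({a, v} : Finset V) := heq ▸ mem_insert_self b {w}
    rcases mem_insert.mp hbav with rfl | hbv
    · exact notMem_erase b A hbA
    · exact hv (mem_singleton.mp hbv ▸ mem_of_mem_erase hbA)

end Graph

section EdgeIdeal

open Finset

variable {σ R : Type*} [CommSemiring R]

/-- The square-free monomial ideal generated by the products `∏ i ∈ T, X i` with `T ∈ G`, that is,
the edge ideal of the hypergraph `G`. -/
noncomputable def edgeIdeal (R : Type*) [CommSemiring R] (G : Set (Finset σ)) :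
    Ideal (MvPolynomial σ R) :=
  Ideal.span ((fun T ↦ ∏ i ∈ T, X i) '' G)

lemma sum_single_one_le_iff {T : Finset σ} {m : σ →₀ ℕ} :
    ∑ i ∈ T, Finsupp.single i 1 ≤ m ↔ T ⊆ m.support := by
  classical
  simp only [Finsupp.le_def, Finsupp.finsetSum_apply, Finsupp.single_apply, sum_ite_eq',
    subset_iff, Finsupp.mem_support_iff]
  exact forall_congr' fun i ↦ by split_ifs with hi <;> simp [hi, Nat.one_le_iff_ne_zero]

lemma mem_edgeIdeal_iff {G : Set (Finset σ)} {p : MvPolynomial σ R} :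
    p ∈ edgeIdeal R G ↔ ∀ m ∈ p.support, ∃ T ∈ G, T ⊆ m.support := by
  have hmon : (fun T : Finset σ ↦ ∏ i ∈ T, (X i : MvPolynomial σ R)) =
      (fun m ↦ monomial m 1) ∘ fun T ↦ ∑ i ∈ T, Finsupp.single i 1 :=
    funext fun T ↦ (monomial_sum_one T fun i ↦ Finsupp.single i 1).symm
  rw [edgeIdeal, hmon, Set.image_comp, mem_ideal_span_monomial_image]
  simp only [Set.exists_mem_image, sum_single_one_le_iff]

lemma edgeIdeal_eq_iInf_span_X (G : Set (Finset σ)) :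
    edgeIdeal R G =
      ⨅ (C : Finset σ) (_ : ∀ T ∈ G, ¬ T ⊆ C), Ideal.span (X '' {i | i ∉ C}) := by
  ext p
  simp only [mem_edgeIdeal_iff, Submodule.mem_iInf, mem_ideal_span_X_image]
  constructor
  · intro hp C hC m hm
    obtain ⟨T, hT, hTm⟩ := hp m hm
    obtain ⟨i, hiT, hiC⟩ := not_subset.mp (hC T hT)
    exact ⟨i, hiC, Finsupp.mem_support_iff.mp (hTm hiT)⟩
  · intro hp m hm
    by_contra! hC
    obtain ⟨i, hi, him⟩ := hp m.support hC m hm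
    exact hi (Finsupp.mem_support_iff.mpr him)

lemma edgeIdeal_le_idealOfVars_pow {G : Set (Finset σ)} {k : ℕ} (hG : ∀ T ∈ G, k ≤ #T) :
    edgeIdeal R G ≤ idealOfVars σ R ^ k := by
  rw [edgeIdeal, Ideal.span_le]
  rintro _ ⟨T, hT, rfl⟩
  refine Ideal.pow_le_pow_right (hG T hT) ?_
  rw [← prod_const]
  exact Ideal.prod_mem_prod fun i _ ↦ Ideal.subset_span (Set.mem_range_self i)

lemma X_notMem_idealOfVars_sq [Nontrivial R] (i : σ) :
    (X i : MvPolynomial σ R) ∉ idealOfVars σ R ^ 2 := by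
  rw [X, monomial_mem_pow_idealOfVars_iff 2 _ one_ne_zero]
  simp

end EdgeIdeal

section SumOfVariables

variable {σ R : Type*} [CommRing R]

lemma span_X_eq_ker_aeval (s : Set σ) [DecidablePred (· ∈ s)] :
    Ideal.span (X '' s : Set (MvPolynomial σ R)) =
      RingHom.ker (aeval (R := R) fun i ↦ if i ∈ s then (0 : MvPolynomial σ R) else X i) := by
  set φ : MvPolynomial σ R →ₐ[R] MvPolynomial σ R := aeval fun i ↦ if i ∈ s then 0 else X i
  apply le_antisymm
  · rw [Ideal.span_le]
    rintro _ ⟨i, hi, rfl⟩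
    simp [φ, hi]
  · intro p hp
    set π := Ideal.Quotient.mkₐ R (Ideal.span (X '' s : Set (MvPolynomial σ R)))
    have hπφ : π.comp φ = π := by
      ext i
      by_cases hi : i ∈ s
      · simpa [φ, π, hi, eq_comm (a := (0 : _ ⧸ _)), Ideal.Quotient.eq_zero_iff_mem] using
          Ideal.subset_span (Set.mem_image_of_mem X hi)
      · simp [φ, hi]
    rw [← Ideal.Quotient.mkₐ_ker R (Ideal.span _), RingHom.mem_ker]
    change π p = 0
    rw [← hπφ, AlgHom.comp_apply, (RingHom.mem_ker).mp hp, map_zero]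

lemma isPrime_span_X_image [IsDomain R] (s : Set σ) :
    (Ideal.span (X '' s : Set (MvPolynomial σ R))).IsPrime := by
  classical
  rw [span_X_eq_ker_aeval]
  exact RingHom.ker_isPrime _

lemma sum_X_notMem_span_X_image [Fintype σ] [Nontrivial R] {s : Set σ} {i : σ} (hi : i ∉ s) :
    ∑ j, X j ∉ Ideal.span (X '' s : Set (MvPolynomial σ R)) := by
  classical
  rw [span_X_eq_ker_aeval, RingHom.mem_ker]
  intro h
  simpa [hi, coeff_sum, apply_ite, coeff_X, Finsupp.single_left_inj] using
    congr(coeff (Finsupp.single i 1) $h)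

lemma mem_edgeIdeal_of_sum_X_mul_mem [Fintype σ] [IsDomain R] {G : Set (Finset σ)}
    {p : MvPolynomial σ R} (hp : p ∈ idealOfVars σ R)
    (h : (∑ i, X i) * p ∈ edgeIdeal R G) : p ∈ edgeIdeal R G := by
  rw [edgeIdeal_eq_iInf_span_X] at h ⊢
  simp only [Submodule.mem_iInf] at h ⊢
  intro C hC
  obtain rfl | ⟨i, hi⟩ := C.eq_empty_or_nonempty
  · simpa [idealOfVars] using hp
  · exact ((isPrime_span_X_image _).mem_or_mem (h C hC)).resolve_left
      (sum_X_notMem_span_X_image (not_not_intro hi))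

lemma sum_X_mem_idealOfVars [Fintype σ] : ∑ i, X i ∈ idealOfVars σ R :=
  sum_mem fun i _ ↦ Ideal.subset_span (Set.mem_range_self i)

end SumOfVariables

section IdealOfVars

variable {σ R : Type} [CommRing R] {I : Ideal (MvPolynomial σ R)}

lemma one_le_moduleDepth_idealQuot_edgeIdeal [Finite σ] [IsDomain R] {G : Set (Finset σ)}
    (hG : ∀ T ∈ G, 2 ≤ T.card) (hI : I ≤ idealOfVars σ R) (hI' : ¬ I ≤ idealOfVars σ R ^ 2) :
    1 ≤ moduleDepth (idealOfVars σ R) (idealQuot I (edgeIdeal R G)) := by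
  have := Fintype.ofFinite σ
  refine one_le_moduleDepth sum_X_mem_idealOfVars (isRegular_singleton_idealQuot
    (fun p hp ↦ mem_edgeIdeal_of_sum_X_mul_mem (hI hp)) fun h ↦ hI' (h.trans ?_))
  refine sup_le (edgeIdeal_le_idealOfVars_pow hG) ?_
  rw [sq]
  exact Ideal.mul_mono ((Ideal.span_singleton_le_iff_mem _).mpr sum_X_mem_idealOfVars) hI

lemma moduleDepth_idealQuot_le_one [Nontrivial R] {J : Ideal (MvPolynomial σ R)} {B : Set σ}
    (hI : I ≤ idealOfVars σ R) (hJ : J ≤ idealOfVars σ R ^ 2) (hB : B.Nonempty)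
    (hBI : ∀ b ∈ B, X b ∈ I) (hBJ : ∀ b ∈ B, ∀ v ∉ B, X b * X v ∈ J) :
    moduleDepth (idealOfVars σ R) (idealQuot I J) ≤ 1 := by
  set 𝔟 : Ideal (MvPolynomial σ R) := Ideal.span (X '' B)
  set 𝔠 : Ideal (MvPolynomial σ R) := Ideal.span (X '' Bᶜ)
  have hvars : idealOfVars σ R = 𝔟 ⊔ 𝔠 := by
    rw [← Ideal.span_union, ← Set.image_union, Set.union_compl_self, Set.image_univ]
  have hbI : 𝔟 ≤ I := Ideal.span_le.mpr (Set.forall_mem_image.mpr hBI)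
  have hbcJ : 𝔟 * 𝔠 ≤ J := by
    rw [Ideal.span_mul_span', Ideal.span_le]
    rintro _ ⟨_, ⟨b, hb, rfl⟩, _, ⟨v, hv, rfl⟩, rfl⟩
    exact hBJ b hb v hv
  refine moduleDepth_le_one fun y hy z hz hreg ↦ ?_
  have hsq : 𝔟 ≤ idealOfVars σ R ^ 2 :=
    (le_sup_mul_of_isWeaklyRegular_pair hbI hbcJ (hvars ▸ hy) (hvars ▸ hz) hreg).trans
      (sup_le hJ (sq (idealOfVars σ R) ▸ Ideal.mul_mono hI (hbI.trans hI)))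
  obtain ⟨b, hb⟩ := hB
  exact X_notMem_idealOfVars_sq b (hsq (Ideal.subset_span (Set.mem_image_of_mem X hb)))

end IdealOfVars

lemma exists_span_sqMon_eq_span_X {K : Type} [Field K] {n : ℕ} {ι : Type*} [Fintype ι]
    {f : ι → Finset (Fin n)} (hf : Function.Injective f) (hcard : ∀ i, (f i).card = 1) :
    ∃ A : Finset (Fin n), A.card = Fintype.card ι ∧
      Ideal.span (Set.range fun i ↦ sqMon K (f i)) = Ideal.span (X '' (A : Set (Fin n))) := by
  choose a ha using fun i ↦ Finset.card_eq_one.mp (hcard i)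
  obtain rfl : f = fun i ↦ {a i} := funext ha
  have hainj : Function.Injective a := fun i j hij ↦ hf (congrArg singleton hij)
  refine ⟨Finset.univ.map ⟨a, hainj⟩, Finset.card_map _, ?_⟩
  simp [sqMon, ← Set.range_comp, Function.comp_def]

theorem stmt_10_general {σ R : Type} [Finite σ] [CommRing R] [IsDomain R] (A : Finset σ)
    (G : Set (Finset σ)) (hG : ∀ T ∈ G, 2 ≤ T.card)
    (hcard : Set.ncard {T : Finset σ | T.card = 2 ∧
      (∏ i ∈ T, X i : MvPolynomial σ R) ∈ Ideal.span (X '' (A : Set σ)) ∧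
      (∏ i ∈ T, X i : MvPolynomial σ R) ∉ edgeIdeal R G} < A.card) :
    moduleDepth (idealOfVars σ R) (idealQuot (Ideal.span (X '' (A : Set σ))) (edgeIdeal R G)) =
      1 := by
  classical
  rw [Set.ncard_eq_toFinset_card _] at hcard
  obtain ⟨B, hBA, ⟨b, hb⟩, hB⟩ := exists_nonempty_subset_forall_pair_notMem hcard
  have hX : ∀ a ∈ A, (X a : MvPolynomial σ R) ∈ Ideal.span (X '' (A : Set σ)) :=
    fun a ha ↦ Ideal.subset_span (Set.mem_image_of_mem X ha)
  have hA : Ideal.span (X '' (A : Set σ)) ≤ idealOfVars σ R :=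
    Ideal.span_mono (Set.image_subset_range X _)
  apply le_antisymm
  · refine moduleDepth_idealQuot_le_one hA (edgeIdeal_le_idealOfVars_pow hG) ⟨b, hb⟩
      (fun c hc ↦ hX c (hBA hc)) fun c hc v hv ↦ ?_
    have hcv : c ≠ v := ne_of_mem_of_not_mem hc hv
    have hpair := hB c hc v hv
    simp only [Set.Finite.mem_toFinset, Set.mem_ofPred_eq, Finset.card_pair hcv,
      Finset.prod_pair hcv, true_and, not_and_not_right] at hpair
    exact hpair (Ideal.mul_mem_right _ _ (hX c (hBA hc)))
  · exact one_le_moduleDepth_idealQuot_edgeIdeal hG hA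
      fun h ↦ X_notMem_idealOfVars_sq b (h (hX b (hBA hb)))

/-- Proposition 1.14. -/
theorem stmt_10 (n : ℕ) (K : Type) [Field K]
    (I J : Ideal (MvPolynomial (Fin n) K)) (hJ0 : J ≠ ⊥) (hJI : J < I)
    (r : ℕ) (hr : 0 < r) (f : Fin r → Finset (Fin n)) (hfinj : Function.Injective f)
    (hfd : ∀ i, (f i).card = 1)
    (hIgen : I = Ideal.span (Set.range fun i => sqMon K (f i)))
    (hJgen : GenBySqMonOfDeg K (fun k => k = 2) J)
    (s : ℕ)
    (hs : s = Set.ncard {T : Finset (Fin n) |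
      T.card = 2 ∧ sqMon K T ∈ I ∧ sqMon K T ∉ J})
    (hrs : s < r) :
    moduleDepth (maxGraded K n) (idealQuot I J) = (1 : ℕ∞) := by
  obtain ⟨G, hG, rfl⟩ := hJgen
  obtain ⟨A, hA, hIA⟩ := exists_span_sqMon_eq_span_X (K := K) hfinj hfd
  rw [Fintype.card_fin] at hA
  subst hIgen hs hA
  rw [hIA] at hrs ⊢
  exact stmt_10_general A G (fun T hT ↦ (hG T hT).ge) hrs
end
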